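/- arXiv:2110.08354 — 3 statements merged into one kernel-verified Lean document; each statement's English description precedes it below -/
import Mathlib

section
/- Let K be a field, f ∈ K[x] of degree n ≥ 1, a ∈ K[x] of degree < n, m ≥ 1, and let B ∈ K[y]^{m×m} be an upper triangular basis of relations of R_m^{(a,f)}. Then the diagonal entries of B are, up to multiplication by nonzero elements of K, the invariant factors of B. Exactly k of these invariant factors are nonconstant, for some k ≤ min(m,n), and these nonconstant ones are, again up to nonzero constant factors, the k invariant factors of largest degree of the characteristic matrix y·I_n − M_a; the one of largest degree among them equals the minimal polynomial of a modulo f (that is, the minimal polynomial of the matrix M_a). -/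
open Polynomial Matrix

noncomputable section

variable {K : Type*} [Field K]

/-- Matrix of multiplication by `a` modulo `f` in the basis `1, x, ..., x^(n-1)`:
its `k`-th column is the coefficient vector of `(x^k * a) mod f`. -/
def mulMat (f a : K[X]) (n : ℕ) : Matrix (Fin n) (Fin n) K :=
  fun i k => ((X ^ (k : ℕ) * a) % f).coeff (i : ℕ)

/-- `r(x, a(x))` where `r` is the bivariate polynomial with coefficient vector `v`
(under the coefficient-vector identification `r = v 0 + (v 1) x + ⋯ + (v (m-1)) x^(m-1)`). -/
def relEval (a : K[X]) {m : ℕ} (v : Fin m → K[X]) : K[X] :=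
  ∑ i : Fin m, X ^ (i : ℕ) * ((v i).comp a)

/-- `v` represents an element of the module of relations `R_m^{(a,f)}`. -/
def IsRelation (f a : K[X]) {m : ℕ} (v : Fin m → K[X]) : Prop :=
  f ∣ relEval a v

/-- Matrix of relations of `R_m^{(a,f)}`: nonsingular, all columns are relations. -/
def IsRelMat (f a : K[X]) {m : ℕ} (R : Matrix (Fin m) (Fin m) K[X]) : Prop :=
  R.det ≠ 0 ∧ ∀ j, IsRelation f a (fun i => R i j)

/-- Basis of relations of `R_m^{(a,f)}`: matrix of relations whose columns generate
the module of relations. -/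
def IsRelBasis (f a : K[X]) {m : ℕ} (R : Matrix (Fin m) (Fin m) K[X]) : Prop :=
  IsRelMat f a R ∧ ∀ v : Fin m → K[X], IsRelation f a v →
    v ∈ Submodule.span K[X] (Set.range fun j => fun i => R i j)


/-- `σ` is the (decreasingly ordered) list of invariant factors of the nonsingular square
polynomial matrix `M`: the `σ i` are monic, `σ j ∣ σ i` whenever `i ≤ j`, and `M` has Smith
normal form `diag σ`, i.e. `U * M * V = diag σ` for matrices with unit (nonzero constant)
determinant. -/
def IsInvariantFactors {s : ℕ} (M : Matrix (Fin s) (Fin s) K[X]) (σ : Fin s → K[X]) : Prop :=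
  (∀ i, (σ i).Monic) ∧ (∀ i j : Fin s, i ≤ j → σ j ∣ σ i) ∧
    ∃ U V : Matrix (Fin s) (Fin s) K[X],
      IsUnit U.det ∧ IsUnit V.det ∧ U * M * V = Matrix.diagonal σ

/-- One half of the uniqueness of the Smith normal form. -/
theorem aux_smith_dvd {s : ℕ} (σ ρ : Fin s → K[X])
    (hσ0 : ∀ i, σ i ≠ 0)
    (hσ : ∀ i j : Fin s, i ≤ j → σ j ∣ σ i) (hρ : ∀ i j : Fin s, i ≤ j → ρ j ∣ ρ i)
    (P V : Matrix (Fin s) (Fin s) K[X]) (hP : IsUnit P.det)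
    (h : Matrix.diagonal σ * V = P * Matrix.diagonal ρ) (k : Fin s) : σ k ∣ ρ k := by
  rw [UniqueFactorizationMonoid.dvd_iff_emultiplicity_le (hσ0 k)]
  intro p hp
  rw [emultiplicity_le_emultiplicity_iff]
  intro e he
  by_contra hne
  have hent : ∀ i j, i ≤ k → k ≤ j → p ∣ P i j := by
    intro i j hi hj
    by_contra hpij
    have h1 : σ i * V i j = P i j * ρ j := by
      have := congrFun (congrFun h i) j
      simpa [Matrix.diagonal_mul, Matrix.mul_diagonal] using this
    have h2 : p ^ e ∣ P i j * ρ j := by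
      rw [← h1]
      exact dvd_mul_of_dvd_left (he.trans (hσ i k hi)) _
    exact hne ((hp.pow_dvd_of_dvd_mul_left e hpij h2).trans (hρ k j hj))
  have hdet : p ∣ P.det := by
    rw [Matrix.det_apply]
    refine Finset.dvd_sum fun π _ => ?_
    have hex : ∃ j, P (π j) j ∈ {x | p ∣ x} := by
      by_contra hcon
      push Not at hcon
      have hlt : ∀ i, i ≤ k → π.symm i < k := by
        intro i hi
        by_contra hlt
        apply hcon (π.symm i)
        simpa using hent i (π.symm i) hi (not_lt.1 hlt)
      have hc := Finset.card_le_card_of_injOn (s := Finset.Iic k) (t := Finset.Iio k)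
        π.symm (by intro i hi; simpa using hlt i (by simpa using hi)) π.symm.injective.injOn
      simp at hc
    obtain ⟨j, hj⟩ := hex
    rw [Units.smul_def, zsmul_eq_mul]
    exact dvd_mul_of_dvd_right (dvd_trans hj (Finset.dvd_prod_of_mem (fun i => P (π i) i) (Finset.mem_univ j))) _
  exact hp.not_isUnit (isUnit_of_dvd_unit hdet hP)

/-- Uniqueness of the Smith normal form. -/
theorem aux_smith_unique {s : ℕ} (σ ρ : Fin s → K[X])
    (hσm : ∀ i, (σ i).Monic) (hρm : ∀ i, (ρ i).Monic)
    (hσ : ∀ i j : Fin s, i ≤ j → σ j ∣ σ i) (hρ : ∀ i j : Fin s, i ≤ j → ρ j ∣ ρ i)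
    (U V : Matrix (Fin s) (Fin s) K[X]) (hU : IsUnit U.det) (hV : IsUnit V.det)
    (h : U * Matrix.diagonal ρ * V = Matrix.diagonal σ) (k : Fin s) : σ k = ρ k := by
  refine eq_of_monic_of_associated (hσm k) (hρm k) (associated_of_dvd_dvd ?_ ?_)
  · refine aux_smith_dvd σ ρ (fun i => (hσm i).ne_zero) hσ hρ U V⁻¹ hU ?_ k
    rw [← h, Matrix.mul_nonsing_inv_cancel_right _ _ hV]
  · refine aux_smith_dvd ρ σ (fun i => (hρm i).ne_zero) hρ hσ U⁻¹ V
      (Matrix.isUnit_nonsing_inv_det _ hU) ?_ k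
    rw [← h, Matrix.mul_assoc, Matrix.nonsing_inv_mul_cancel_left _ _ hU]

theorem aux_monic_gen (J : Ideal K[X]) (hJ : J ≠ ⊥) :
    ∃ b : K[X], b.Monic ∧ b ∈ J ∧ ∀ x ∈ J, b ∣ x := by
  have hg : Submodule.IsPrincipal.generator J ≠ 0 := by
    intro h
    exact hJ ((Submodule.IsPrincipal.eq_bot_iff_generator_eq_zero J).2 h)
  refine ⟨Submodule.IsPrincipal.generator J * C (Submodule.IsPrincipal.generator J).leadingCoeff⁻¹,
    monic_mul_leadingCoeff_inv hg, J.mul_mem_right _ (Submodule.IsPrincipal.generator_mem J), ?_⟩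
  intro x hx
  have h1 := (Submodule.IsPrincipal.mem_iff_generator_dvd J).1 hx
  refine dvd_trans ?_ h1
  rw [IsUnit.mul_right_dvd]
  exact Polynomial.isUnit_C.2 (by simpa using hg)

theorem aux_C_dvd {p q : K[X]} (h : p ∣ q) : (C p : K[X][X]) ∣ C q := by
  obtain ⟨c, rfl⟩ := h
  exact ⟨C c, C_mul⟩

/-- Lazard-type structure statement. -/
theorem aux_lazard (I : Ideal K[X][X]) (b : ℕ → K[X]) (g : ℕ → K[X][X]) (hb : ∀ i, b i ≠ 0)
    (hg : ∀ i, g i ∈ I) (hgd : ∀ i, (g i).natDegree ≤ i) (hgc : ∀ i, (g i).coeff i = b i)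
    (hdvd : ∀ i, ∀ r ∈ I, r.natDegree ≤ i → b i ∣ r.coeff i) (i : ℕ) :
    ∀ r ∈ I, r.natDegree ≤ i → C (b i) ∣ r := by
  induction i with
  | zero =>
    intro r hr hd
    have h1 := hdvd 0 r hr hd
    rw [Polynomial.eq_C_of_natDegree_le_zero hd]
    exact aux_C_dvd h1
  | succ i ih =>
    have hlow : ∀ r : K[X][X], r.natDegree ≤ i + 1 → r.coeff (i+1) = 0 → r.natDegree ≤ i := by
      intro r h1 h2
      by_contra h3
      have h4 : r.natDegree = i + 1 := by omega
      have h5 : r.leadingCoeff = 0 := by rw [leadingCoeff, h4, h2]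
      rw [leadingCoeff_eq_zero] at h5
      simp [h5] at h4
    have hXd : (X * g i).natDegree ≤ i + 1 := by
      refine natDegree_mul_le.trans ?_
      have := hgd i
      have := natDegree_X_le (R := K[X])
      omega
    obtain ⟨q, hq⟩ : b (i+1) ∣ b i := by
      have := hdvd (i+1) (X * g i) (I.mul_mem_left _ (hg i)) hXd
      rwa [coeff_X_mul, hgc] at this
    have hq0 : q ≠ 0 := by rintro rfl; exact hb i (by simpa using hq)
    have hgi : C (b (i+1)) ∣ g (i+1) := by
      have h1 : C (b i) ∣ C q * g (i+1) - X * g i := by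
        apply ih
        · exact I.sub_mem (I.mul_mem_left _ (hg _)) (I.mul_mem_left _ (hg i))
        · apply hlow
          · refine (natDegree_sub_le _ _).trans (max_le ?_ hXd)
            exact (natDegree_C_mul_le _ _).trans (hgd _)
          · rw [coeff_sub, coeff_C_mul, coeff_X_mul, hgc, hgc, hq]; ring
      have h2 : C (b i) ∣ X * g i := dvd_mul_of_dvd_right (ih _ (hg i) (hgd i)) _
      have h3 : C (b i) ∣ C q * g (i+1) := (dvd_sub_left h2).1 h1
      rw [hq, mul_comm, C_mul] at h3
      exact (mul_dvd_mul_iff_left (by simpa using hq0)).1 h3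
    intro r hr hd
    obtain ⟨c, hc⟩ := hdvd (i+1) r hr hd
    have h1 : C (b i) ∣ r - C c * g (i+1) := by
      apply ih
      · exact I.sub_mem hr (I.mul_mem_left _ (hg _))
      · apply hlow
        · exact (natDegree_sub_le _ _).trans (max_le hd ((natDegree_C_mul_le _ _).trans (hgd _)))
        · rw [coeff_sub, coeff_C_mul, hgc, hc]; ring
    have h2 : C (b (i+1)) ∣ r - C c * g (i+1) := (aux_C_dvd ⟨q, hq⟩).trans h1
    exact (dvd_sub_left (dvd_mul_of_dvd_right hgi _)).1 h2

theorem aux_span (I : Ideal K[X][X]) (b : ℕ → K[X]) (g : ℕ → K[X][X])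
    (hg : ∀ i, g i ∈ I) (hgd : ∀ i, (g i).natDegree ≤ i) (hgc : ∀ i, (g i).coeff i = b i)
    (hdvd : ∀ i, ∀ r ∈ I, r.natDegree ≤ i → b i ∣ r.coeff i) (N : ℕ) :
    ∀ r ∈ I, (∀ j, N ≤ j → r.coeff j = 0) →
      ∃ c : ℕ → K[X], r = ∑ j ∈ Finset.range N, C (c j) * g j := by
  induction N with
  | zero =>
    intro r hr h
    refine ⟨0, ?_⟩
    ext1 j
    simpa using h j (Nat.zero_le _)
  | succ N ih =>
    intro r hr h
    have hd : r.natDegree ≤ N := by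
      rw [natDegree_le_iff_coeff_eq_zero]
      intro j hj
      exact h j hj
    obtain ⟨d, hd⟩ := hdvd N r hr hd
    obtain ⟨c, hc⟩ := ih (r - C d * g N) (I.sub_mem hr (I.mul_mem_left _ (hg _))) (by
      intro j hj
      rw [coeff_sub, coeff_C_mul]
      rcases hj.eq_or_lt with rfl | hj
      · rw [hgc, hd]; ring
      · rw [h j hj, coeff_eq_zero_of_natDegree_lt ((hgd N).trans_lt hj)]; ring)
    refine ⟨fun j => if j = N then d else c j, ?_⟩
    simp only [Finset.sum_range_succ, if_true]
    rw [sub_eq_iff_eq_add] at hc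
    rw [hc]
    congr 1
    refine Finset.sum_congr rfl fun j hj => ?_
    rw [if_neg (Finset.mem_range.1 hj).ne]

/-- The ideal of bivariate relations. -/
def auxIdeal (f a : K[X]) : Ideal K[X][X] :=
  Ideal.comap (eval₂RingHom (compRingHom a) X) (Ideal.span {f})

/-- Bivariate polynomial attached to a vector. -/
def auxPoly {m : ℕ} (v : Fin m → K[X]) : K[X][X] := ∑ i : Fin m, C (v i) * X ^ (i : ℕ)

theorem aux_rel_iff (f a : K[X]) {m : ℕ} (v : Fin m → K[X]) :
    IsRelation f a v ↔ auxPoly v ∈ auxIdeal f a := by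
  rw [IsRelation, auxIdeal, Ideal.mem_comap, Ideal.mem_span_singleton, auxPoly, relEval, map_sum]
  have : ∀ i : Fin m, (eval₂RingHom (compRingHom a) X) (C (v i) * X ^ (i:ℕ))
      = X ^ (i : ℕ) * ((v i).comp a) := by
    intro i
    rw [coe_eval₂RingHom, eval₂_mul, eval₂_C, eval₂_X_pow, coe_compRingHom_apply, mul_comm]
  rw [Finset.sum_congr rfl fun i _ => this i]

theorem auxPoly_coeff {m : ℕ} (v : Fin m → K[X]) (i : Fin m) : (auxPoly v).coeff i = v i := by
  rw [auxPoly, finsetSum_coeff, Finset.sum_eq_single i]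
  · simp
  · intro j _ hj
    rw [coeff_C_mul_X_pow, if_neg]
    intro h
    exact hj (Fin.ext h.symm)
  · simp

theorem auxPoly_coeff_ge {m : ℕ} (v : Fin m → K[X]) (i : ℕ) (h : m ≤ i) :
    (auxPoly v).coeff i = 0 := by
  rw [auxPoly, finsetSum_coeff]
  refine Finset.sum_eq_zero fun j _ => ?_
  rw [coeff_C_mul_X_pow, if_neg]
  have := j.2
  omega

theorem auxPoly_of_coeff {m : ℕ} (r : K[X][X]) (h : ∀ j, m ≤ j → r.coeff j = 0) :
    auxPoly (fun i : Fin m => r.coeff i) = r := by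
  ext1 j
  by_cases hj : j < m
  · exact auxPoly_coeff (fun i : Fin m => r.coeff i) ⟨j, hj⟩
  · rw [auxPoly_coeff_ge _ _ (not_lt.1 hj), h _ (not_lt.1 hj)]

theorem aux_basis_mulVec {f a : K[X]} {m : ℕ} {R : Matrix (Fin m) (Fin m) K[X]}
    (hR : IsRelBasis f a R) (v : Fin m → K[X]) (hv : IsRelation f a v) :
    ∃ c : Fin m → K[X], v = R *ᵥ c := by
  obtain ⟨c, hc⟩ := (Submodule.mem_span_range_iff_exists_fun K[X]).1 (hR.2 v hv)
  refine ⟨c, ?_⟩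
  rw [← hc]
  ext1 i
  simp [Matrix.mulVec, dotProduct, mul_comm]

/-- Invariant factors of any basis of relations. -/
theorem aux_invariant (f a : K[X]) (b : ℕ → K[X]) (g : ℕ → K[X][X]) (hb : ∀ i, (b i).Monic)
    (hg : ∀ i, g i ∈ auxIdeal f a) (hgd : ∀ i, (g i).natDegree ≤ i)
    (hgc : ∀ i, (g i).coeff i = b i)
    (hdvd : ∀ i, ∀ r ∈ auxIdeal f a, r.natDegree ≤ i → b i ∣ r.coeff i)
    (hchain : ∀ i j, i ≤ j → b j ∣ b i)
    {N : ℕ} (R : Matrix (Fin N) (Fin N) K[X]) (hR : IsRelBasis f a R)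
    (σ : Fin N → K[X]) (hσ : IsInvariantFactors R σ) (i : Fin N) : σ i = b i := by
  have hL := aux_lazard (auxIdeal f a) b g (fun i => (hb i).ne_zero) hg hgd hgc hdvd
  choose h hh using fun i => hL i (g i) (hg i) (hgd i)
  let T : Matrix (Fin N) (Fin N) K[X] := fun i j => (h j).coeff i
  let D : Matrix (Fin N) (Fin N) K[X] := Matrix.diagonal fun i => b i
  have hcoef : ∀ i j, (g j).coeff i = (h j).coeff i * b j := by
    intro i j
    rw [hh j, coeff_C_mul, mul_comm]
  have hTD : ∀ i j, (T * D) i j = (g j).coeff i := by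
    intro i j
    rw [Matrix.mul_diagonal, hcoef]
  have hTdet : T.det = 1 := by
    rw [Matrix.det_of_isUpperTriangular]
    · refine Finset.prod_eq_one fun j _ => ?_
      have := hcoef j j
      rw [hgc] at this
      exact (mul_right_cancel₀ (hb j).ne_zero ((one_mul _).trans this)).symm
    · intro i j hij
      have hij : j < i := hij
      have h1 := hcoef i j
      rw [coeff_eq_zero_of_natDegree_lt ((hgd j).trans_lt (by exact_mod_cast hij))] at h1
      exact (mul_eq_zero.1 h1.symm).resolve_right (hb j).ne_zero
  have h1 : ∀ j : Fin N, ∃ c : Fin N → K[X], (fun i => R i j) = (T * D) *ᵥ c := by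
    intro j
    obtain ⟨c, hc⟩ := aux_span (auxIdeal f a) b g hg hgd hgc hdvd N _
      ((aux_rel_iff f a _).1 (hR.1.2 j)) (auxPoly_coeff_ge _)
    refine ⟨fun k => c k, ?_⟩
    ext1 i
    have h2 := congrArg (fun p => coeff p (i : ℕ)) hc
    simp only [auxPoly_coeff, finsetSum_coeff, coeff_C_mul] at h2
    rw [h2, Finset.sum_range]
    simp only [Matrix.mulVec, dotProduct, hTD]
    exact Finset.sum_congr rfl fun _ _ => mul_comm _ _
  have h2 : ∀ j : Fin N, ∃ c : Fin N → K[X], (fun i => (T * D) i j) = R *ᵥ c := by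
    intro j
    apply aux_basis_mulVec hR
    rw [aux_rel_iff]
    have : (fun i => (T * D) i j) = fun i : Fin N => (g j).coeff i := by
      ext1 i; exact hTD i j
    rw [this, auxPoly_of_coeff]
    · exact hg j
    · intro k hk
      exact coeff_eq_zero_of_natDegree_lt ((hgd j).trans_lt (by have := j.2; omega))
  choose W hW using h1
  choose W' hW' using h2
  have e1 : R = T * D * (Matrix.of W)ᵀ := by
    ext1 i j
    exact congrFun (hW j) i
  have e2 : T * D = R * (Matrix.of W')ᵀ := by
    ext1 i j
    exact congrFun (hW' j) i
  have hWdet : IsUnit (Matrix.of W)ᵀ.det := by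
    have h3 : R.det = R.det * ((Matrix.of W')ᵀ.det * (Matrix.of W)ᵀ.det) := by
      conv_lhs => rw [e1, e2]
      rw [Matrix.det_mul, Matrix.det_mul, mul_assoc]
    have h4 := mul_left_cancel₀ hR.1.1 ((mul_one _).trans h3)
    exact IsUnit.of_mul_eq_one_right _ h4.symm
  obtain ⟨hσm, hσd, U, V, hU, hV, hUV⟩ := hσ
  refine aux_smith_unique σ (fun i => b i) hσm (fun i => hb i) hσd
    (fun i j hij => hchain i j hij) (U * T) ((Matrix.of W)ᵀ * V) ?_ ?_ ?_ i
  · rw [Matrix.det_mul, hTdet, mul_one]; exact hU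
  · rw [Matrix.det_mul]; exact hWdet.mul hV
  · rw [← hUV, e1]
    simp only [Matrix.mul_assoc, D]

theorem aux_diag (f a : K[X]) (b : ℕ → K[X]) (g : ℕ → K[X][X])
    (hg : ∀ i, g i ∈ auxIdeal f a) (hgd : ∀ i, (g i).natDegree ≤ i)
    (hgc : ∀ i, (g i).coeff i = b i)
    (hdvd : ∀ i, ∀ r ∈ auxIdeal f a, r.natDegree ≤ i → b i ∣ r.coeff i)
    {m : ℕ} (B : Matrix (Fin m) (Fin m) K[X]) (hB : IsRelBasis f a B)
    (hBtri : ∀ i j : Fin m, j < i → B i j = 0) (i : Fin m) : Associated (B i i) (b i) := by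
  have hdet : ∀ i, B i i ≠ 0 := by
    have h1 := hB.1.1
    rw [Matrix.det_of_isUpperTriangular (fun i j hij => hBtri i j hij)] at h1
    intro i
    exact Finset.prod_ne_zero_iff.1 h1 i (Finset.mem_univ i)
  apply associated_of_dvd_dvd
  · obtain ⟨c, hc⟩ := aux_basis_mulVec hB (fun k : Fin m => (g i).coeff k) (by
      rw [aux_rel_iff, auxPoly_of_coeff]
      · exact hg i
      · intro k hk
        exact coeff_eq_zero_of_natDegree_lt ((hgd i).trans_lt (by have := i.2; omega)))
    have hz : ∀ d : ℕ, ∀ k : Fin m, m - k ≤ d → i < k → c k = 0 := by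
      intro d
      induction d with
      | zero => intro k hk; have := k.2; omega
      | succ d ih =>
        intro k hk hik
        have h1 := congrFun hc k
        simp only [Matrix.mulVec, dotProduct] at h1
        rw [coeff_eq_zero_of_natDegree_lt ((hgd i).trans_lt hik),
          Finset.sum_eq_single k] at h1
        · exact (mul_eq_zero.1 h1.symm).resolve_left (hdet k)
        · intro l _ hl
          rcases lt_or_gt_of_ne hl with hl | hl
          · rw [hBtri k l hl, zero_mul]
          · rw [ih l (by have : (k : ℕ) < l := hl
                         have := l.2
                         omega) (hik.trans hl), mul_zero]
        · simp
    have h1 := congrFun hc i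
    simp only [Matrix.mulVec, dotProduct] at h1
    rw [hgc, Finset.sum_eq_single i] at h1
    · exact ⟨_, h1⟩
    · intro l _ hl
      rcases lt_or_gt_of_ne hl with hl | hl
      · rw [hBtri i l hl, zero_mul]
      · rw [hz m l (Nat.sub_le _ _) hl, mul_zero]
    · simp
  · have h1 := hdvd i _ ((aux_rel_iff f a _).1 (hB.1.2 i)) (by
      rw [natDegree_le_iff_coeff_eq_zero]
      intro j hj
      by_cases hjm : j < m
      · exact (auxPoly_coeff (fun k => B k i) ⟨j, hjm⟩).trans (hBtri _ _ hj)
      · exact auxPoly_coeff_ge _ _ (not_lt.1 hjm))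
    rwa [auxPoly_coeff] at h1

/-- Univariate polynomial attached to a constant vector. -/
def auxPhi {n : ℕ} (c : Fin n → K) : K[X] := ∑ i : Fin n, X ^ (i : ℕ) * C (c i)

theorem auxPhi_add {n : ℕ} (c d : Fin n → K) : auxPhi (c + d) = auxPhi c + auxPhi d := by
  simp [auxPhi, mul_add, Finset.sum_add_distrib]

theorem auxPhi_smul {n : ℕ} (r : K) (c : Fin n → K) : auxPhi (r • c) = C r * auxPhi c := by
  simp only [auxPhi, Finset.mul_sum, Pi.smul_apply, smul_eq_mul, C_mul]
  exact Finset.sum_congr rfl fun _ _ => by ring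

theorem auxPhi_single {n : ℕ} (k : Fin n) : auxPhi (Pi.single k (1 : K)) = X ^ (k : ℕ) := by
  rw [auxPhi, Finset.sum_eq_single k]
  · simp
  · intro j _ hj
    simp [hj]
  · simp

theorem auxPhi_coeff {n : ℕ} (c : Fin n → K) (i : Fin n) : (auxPhi c).coeff i = c i := by
  rw [auxPhi, finsetSum_coeff, Finset.sum_eq_single i]
  · simp
  · intro j _ hj
    rw [coeff_mul_C, coeff_X_pow, if_neg, zero_mul]
    intro h
    exact hj (Fin.ext h.symm)
  · simp

theorem auxPhi_coeff_ge {n : ℕ} (c : Fin n → K) (i : ℕ) (h : n ≤ i) :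
    (auxPhi c).coeff i = 0 := by
  rw [auxPhi, finsetSum_coeff]
  refine Finset.sum_eq_zero fun j _ => ?_
  rw [coeff_mul_C, coeff_X_pow, if_neg, zero_mul]
  have := j.2
  omega

theorem auxPhi_of_coeff {n : ℕ} (r : K[X]) (h : ∀ j, n ≤ j → r.coeff j = 0) :
    auxPhi (fun i : Fin n => r.coeff i) = r := by
  ext1 j
  by_cases hj : j < n
  · exact auxPhi_coeff (fun i : Fin n => r.coeff i) ⟨j, hj⟩
  · rw [auxPhi_coeff_ge _ _ (not_lt.1 hj), h _ (not_lt.1 hj)]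

theorem auxPhi_inj {n : ℕ} {f : K[X]} (hn : 1 ≤ n) (hf : f.natDegree = n) (c : Fin n → K)
    (h : f ∣ auxPhi c) : c = 0 := by
  have h0 : auxPhi c = 0 := by
    apply eq_zero_of_dvd_of_natDegree_lt h
    have : (auxPhi c).natDegree ≤ n - 1 := by
      rw [natDegree_le_iff_coeff_eq_zero]
      intro j hj
      exact auxPhi_coeff_ge c j (by omega)
    omega
  ext i
  rw [← auxPhi_coeff c i, h0]
  simp

theorem auxPhi_col {n : ℕ} {f : K[X]} (a : K[X]) (hn : 1 ≤ n) (hf : f.natDegree = n) (k : Fin n) :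
    auxPhi (fun i => mulMat f a n i k) = (X ^ (k : ℕ) * a) % f := by
  apply auxPhi_of_coeff
  intro j hj
  apply coeff_eq_zero_of_natDegree_lt
  have := natDegree_mod_lt (X ^ (k : ℕ) * a) (q := f) (by omega)
  omega

theorem auxPhi_mulVec {n : ℕ} {f : K[X]} (a : K[X]) (hn : 1 ≤ n) (hf : f.natDegree = n)
    (c : Fin n → K) : f ∣ auxPhi (mulMat f a n *ᵥ c) - a * auxPhi c := by
  have h1 : auxPhi (mulMat f a n *ᵥ c) = ∑ k, C (c k) * ((X ^ (k : ℕ) * a) % f) := by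
    simp only [← auxPhi_col a hn hf, auxPhi, Finset.mul_sum, Matrix.mulVec, dotProduct, map_sum]
    rw [Finset.sum_comm]
    refine Finset.sum_congr rfl fun _ _ => Finset.sum_congr rfl fun _ _ => ?_
    rw [C_mul]; ring
  have h2 : a * auxPhi c = ∑ k, C (c k) * (X ^ (k : ℕ) * a) := by
    simp only [auxPhi, Finset.mul_sum]
    refine Finset.sum_congr rfl fun _ _ => ?_
    ring
  rw [h1, h2, ← Finset.sum_sub_distrib]
  refine Finset.dvd_sum fun k _ => ?_
  rw [← mul_sub]
  apply dvd_mul_of_dvd_right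
  refine ⟨-((X ^ (k : ℕ) * a) / f), ?_⟩
  have := EuclideanDomain.div_add_mod (X ^ (k : ℕ) * a) f
  linear_combination this

theorem auxPhi_aeval {n : ℕ} {f : K[X]} (a : K[X]) (hn : 1 ≤ n) (hf : f.natDegree = n)
    (p : K[X]) : ∀ c : Fin n → K,
      f ∣ auxPhi (aeval (mulMat f a n) p *ᵥ c) - p.comp a * auxPhi c := by
  induction p using Polynomial.induction_on' with
  | add p q hp hq =>
    intro c
    have := dvd_add (hp c) (hq c)
    rw [map_add, Matrix.add_mulVec, auxPhi_add, add_comp]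
    convert this using 1
    ring
  | monomial e r =>
    induction e with
    | zero =>
      intro c
      have h : aeval (mulMat f a n) (monomial 0 r) *ᵥ c = r • c := by
        rw [monomial_zero_left, aeval_C, Algebra.algebraMap_eq_smul_one, Matrix.smul_mulVec,
          Matrix.one_mulVec]
      rw [h, auxPhi_smul, monomial_zero_left, C_comp, sub_self]
      exact dvd_zero _
    | succ e ih =>
      intro c
      have h : (monomial (e+1) r : K[X]) = monomial e r * X := by
        rw [monomial_mul_X]
      rw [h, map_mul, aeval_X, mul_comp, X_comp, ← Matrix.mulVec_mulVec]
      have := dvd_add (ih (mulMat f a n *ᵥ c))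
        (dvd_mul_of_dvd_right (auxPhi_mulVec a hn hf c) ((monomial e r).comp a))
      convert this using 1
      ring

theorem aux_aeval_iff {n : ℕ} {f : K[X]} (a : K[X]) (hn : 1 ≤ n) (hf : f.natDegree = n)
    (p : K[X]) : aeval (mulMat f a n) p = 0 ↔ f ∣ p.comp a := by
  constructor
  · intro h
    have h1 := auxPhi_aeval a hn hf p (Pi.single ⟨0, hn⟩ 1)
    rw [h, auxPhi_single, Matrix.zero_mulVec] at h1
    have h0 : auxPhi (0 : Fin n → K) = 0 := by simp [auxPhi]
    rw [h0] at h1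
    simpa using h1
  · intro h
    have h1 : ∀ c, aeval (mulMat f a n) p *ᵥ c = 0 := by
      intro c
      apply auxPhi_inj hn hf
      exact (dvd_sub_left (dvd_mul_of_dvd_left h _)).1 (auxPhi_aeval a hn hf p c)
    apply Matrix.mulVec_injective
    ext1 c
    rw [h1 c, Matrix.zero_mulVec]

theorem aux_relEval_add (a : K[X]) {m : ℕ} (v w : Fin m → K[X]) :
    relEval a (v + w) = relEval a v + relEval a w := by
  simp [relEval, mul_add, Finset.sum_add_distrib]

theorem aux_relEval_smul (a : K[X]) {m : ℕ} (p : K[X]) (v : Fin m → K[X]) :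
    relEval a (p • v) = p.comp a * relEval a v := by
  simp only [relEval, Finset.mul_sum, Pi.smul_apply, smul_eq_mul, mul_comp]
  exact Finset.sum_congr rfl fun _ _ => by ring

theorem aux_relEval_C (a : K[X]) {m : ℕ} (c : Fin m → K) :
    relEval a (fun i => C (c i)) = auxPhi c := by
  simp [relEval, auxPhi]

theorem aux_charmatrix_mulVec {n : ℕ} (M : Matrix (Fin n) (Fin n) K) (c : Fin n → K) :
    charmatrix M *ᵥ (fun i => C (c i)) = (X : K[X]) • (fun i => C (c i)) - fun i => C ((M *ᵥ c) i) := by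
  rw [charmatrix, Matrix.sub_mulVec]
  congr 1
  · ext1 i
    simp [Matrix.scalar_apply, Matrix.mulVec_diagonal]
  · ext1 i
    simp [Matrix.mulVec, dotProduct]

theorem aux_charmatrix_col {n : ℕ} {f : K[X]} (a : K[X]) (hn : 1 ≤ n) (hf : f.natDegree = n)
    (k : Fin n) : IsRelation f a (fun i => charmatrix (mulMat f a n) i k) := by
  have h1 : (fun i => charmatrix (mulMat f a n) i k)
      = charmatrix (mulMat f a n) *ᵥ (fun i => C ((Pi.single k (1 : K) : Fin n → K) i)) := by
    have : (fun i => C ((Pi.single k (1 : K) : Fin n → K) i)) = Pi.single k (1 : K[X]) := by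
      ext1 i
      by_cases h : i = k
      · subst h; simp
      · simp [h]
    rw [this, Matrix.mulVec_single_one]
    rfl
  have h2 : relEval a (charmatrix (mulMat f a n) *ᵥ (fun i => C ((Pi.single k (1 : K) : Fin n → K) i)))
     + relEval a (fun i => C ((mulMat f a n *ᵥ (Pi.single k (1 : K) : Fin n → K)) i)) =
      a * auxPhi (Pi.single k (1 : K) : Fin n → K) := by
    rw [← aux_relEval_add, aux_charmatrix_mulVec, sub_add_cancel, aux_relEval_smul, X_comp,
      aux_relEval_C]
  rw [IsRelation, h1]
  rw [aux_relEval_C] at h2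
  have h3 := auxPhi_mulVec a hn hf (Pi.single k (1 : K))
  rw [← dvd_neg]
  convert h3 using 1
  linear_combination -h2

theorem aux_charmatrix_basis {n : ℕ} {f : K[X]} (a : K[X]) (hn : 1 ≤ n) (hf : f.natDegree = n) :
    IsRelBasis f a (charmatrix (mulMat f a n)) := by
  refine ⟨⟨(Matrix.charpoly_monic (mulMat f a n)).ne_zero, aux_charmatrix_col a hn hf⟩, ?_⟩
  set S := Submodule.span K[X] (Set.range fun j => fun i => charmatrix (mulMat f a n) i j) with hS
  have hSrel : ∀ w ∈ S, f ∣ relEval a w := by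
    intro w hw
    induction hw using Submodule.span_induction with
    | mem x hx =>
      obtain ⟨j, rfl⟩ := hx
      exact aux_charmatrix_col a hn hf j
    | zero => simp [relEval]
    | add x y _ _ hx hy => rw [aux_relEval_add]; exact dvd_add hx hy
    | smul p x _ hx => rw [aux_relEval_smul]; exact dvd_mul_of_dvd_right hx _
  have hmulVec : ∀ c, charmatrix (mulMat f a n) *ᵥ c ∈ S := by
    intro c
    rw [hS, Submodule.mem_span_range_iff_exists_fun]
    refine ⟨c, ?_⟩
    ext1 i
    simp [Matrix.mulVec, dotProduct, mul_comm]
  have hadd : ∀ v w : Fin n → K[X], (∃ c : Fin n → K, v - (fun i => C (c i)) ∈ S) →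
      (∃ c : Fin n → K, w - (fun i => C (c i)) ∈ S) →
      ∃ c : Fin n → K, v + w - (fun i => C (c i)) ∈ S := by
    rintro v w ⟨c, hc⟩ ⟨d, hd⟩
    refine ⟨c + d, ?_⟩
    convert S.add_mem hc hd using 1
    ext1 i
    simp
    ring
  have hX : ∀ v : Fin n → K[X], (∃ c : Fin n → K, v - (fun i => C (c i)) ∈ S) →
      ∃ c : Fin n → K, (X : K[X]) • v - (fun i => C (c i)) ∈ S := by
    rintro v ⟨c, hc⟩
    refine ⟨mulMat f a n *ᵥ c, ?_⟩
    convert S.add_mem (S.smul_mem X hc) (hmulVec (fun i => C (c i))) using 1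
    rw [aux_charmatrix_mulVec, smul_sub]
    abel
  have hsingle : ∀ (p : K[X]) (k : Fin n),
      ∃ c : Fin n → K, p • (Pi.single k (1 : K[X]) : Fin n → K[X]) - (fun i => C (c i)) ∈ S := by
    intro p k
    induction p using Polynomial.induction_on' with
    | add p q hp hq => rw [add_smul]; exact hadd _ _ hp hq
    | monomial e r =>
      induction e with
      | zero =>
        refine ⟨Pi.single k r, ?_⟩
        convert S.zero_mem using 1
        ext1 i
        by_cases h : i = k
        · subst h; simp
        · simp [h]
      | succ e ih =>
        have h : (monomial (e+1) r : K[X]) = X * monomial e r := by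
          rw [X_mul_monomial]
        rw [h, mul_smul]
        exact hX _ ih
  have hall : ∀ v : Fin n → K[X], ∃ c : Fin n → K, v - (fun i => C (c i)) ∈ S := by
    intro v
    have hv : v = ∑ k, v k • (Pi.single k (1 : K[X]) : Fin n → K[X]) := by
      ext1 i
      simp [Finset.sum_apply, Pi.single_apply]
    rw [hv]
    generalize (Finset.univ : Finset (Fin n)) = s
    induction s using Finset.induction_on with
    | empty =>
      refine ⟨0, ?_⟩
      convert S.zero_mem using 1
      ext1 i
      simp
    | insert k s hk ih =>
      rw [Finset.sum_insert hk]
      exact hadd _ _ (hsingle _ _) ih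
  intro v hv
  obtain ⟨c, hc⟩ := hall v
  have h1 := hSrel _ hc
  have h2 : relEval a v = relEval a (v - fun i => C (c i)) + auxPhi c := by
    rw [← aux_relEval_C a, ← aux_relEval_add, sub_add_cancel]
  have h3 : f ∣ auxPhi c := by
    rw [IsRelation, h2] at hv
    exact (dvd_add_right h1).1 hv
  have h4 := auxPhi_inj hn hf c h3
  subst h4
  convert hc using 1
  ext1 i
  simp

theorem aux_mem_lead (I : Ideal K[X][X]) (i : ℕ) (x : K[X]) :
    x ∈ I.leadingCoeffNth i ↔ ∃ p ∈ I, p.natDegree ≤ i ∧ p.coeff i = x := by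
  rw [Ideal.leadingCoeffNth, Submodule.mem_map]
  constructor
  · rintro ⟨p, ⟨h1, h2⟩, h3⟩
    exact ⟨p, h2, natDegree_le_iff_degree_le.2 (mem_degreeLE.1 h1), h3⟩
  · rintro ⟨p, h2, h1, h3⟩
    exact ⟨p, ⟨mem_degreeLE.2 (natDegree_le_iff_degree_le.1 h1), h2⟩, h3⟩

theorem aux_mem_C (f a p : K[X]) : C p ∈ auxIdeal f a ↔ f ∣ p.comp a := by
  rw [auxIdeal, Ideal.mem_comap, Ideal.mem_span_singleton, coe_eval₂RingHom, eval₂_C,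
    coe_compRingHom_apply]

theorem aux_f_mem (f a : K[X]) : f.map C ∈ auxIdeal f a := by
  rw [auxIdeal, Ideal.mem_comap, Ideal.mem_span_singleton, coe_eval₂RingHom, eval₂_map]
  have : (compRingHom a).comp (C : K →+* K[X]) = C := by
    ext1 x
    simp
  rw [this, eval₂_C_X]

theorem upperTriangular_basis_diagonal_invariantFactors
    (n m : ℕ) (hn : 1 ≤ n) (hm : 1 ≤ m) (f a : K[X]) (hf : f.natDegree = n)
    (ha : a.degree < (n : WithBot ℕ))
    (B : Matrix (Fin m) (Fin m) K[X])
    (hBtri : ∀ i j : Fin m, j < i → B i j = 0)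
    (hB : IsRelBasis f a B)
    (σ : Fin m → K[X]) (hσ : IsInvariantFactors B σ)
    (τ : Fin n → K[X]) (hτ : IsInvariantFactors (charmatrix (mulMat f a n)) τ) :
    (∃ c : Fin m → K, (∀ i, c i ≠ 0) ∧ ∀ i, B i i = C (c i) * σ i) ∧
    ∃ k : ℕ, 1 ≤ k ∧ ∃ hk : k ≤ min m n,
      (∀ i : Fin m, (i : ℕ) < k ↔ 0 < (σ i).natDegree) ∧
      (∀ (i : Fin m) (h : (i : ℕ) < k), σ i = τ ⟨(i : ℕ), by omega⟩) ∧
      σ ⟨0, hm⟩ = minpoly K (mulMat f a n) := by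
  have hI0 : C (minpoly K (mulMat f a n)) ∈ auxIdeal f a := by
    rw [aux_mem_C, ← aux_aeval_iff a hn hf]
    exact minpoly.aeval _ _
  have hmin : (minpoly K (mulMat f a n)).Monic := minpoly.monic (Matrix.isIntegral _)
  have hne : ∀ i, (auxIdeal f a).leadingCoeffNth i ≠ ⊥ := by
    intro i h
    have h1 : minpoly K (mulMat f a n) ∈ (auxIdeal f a).leadingCoeffNth i := by
      apply Ideal.leadingCoeffNth_mono _ (Nat.zero_le i)
      rw [aux_mem_lead]
      exact ⟨_, hI0, by simp, by simp⟩
    rw [h] at h1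
    exact hmin.ne_zero (by simpa using h1)
  choose b hbm hbI hbd using fun i => aux_monic_gen _ (hne i)
  choose g hgI hgd hgc using fun i => (aux_mem_lead _ i _).1 (hbI i)
  have hdvd : ∀ i, ∀ r ∈ auxIdeal f a, r.natDegree ≤ i → b i ∣ r.coeff i := by
    intro i r hr hd
    exact hbd i _ ((aux_mem_lead _ i _).2 ⟨r, hr, hd, rfl⟩)
  have hchain : ∀ i j, i ≤ j → b j ∣ b i := by
    intro i j hij
    exact hbd j _ (Ideal.leadingCoeffNth_mono _ hij (hbI i))
  have hσb := aux_invariant f a b g hbm hgI hgd hgc hdvd hchain B hB σ hσ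
  have hτb := aux_invariant f a b g hbm hgI hgd hgc hdvd hchain _ (aux_charmatrix_basis a hn hf) τ hτ
  have hdiag := aux_diag f a b g hgI hgd hgc hdvd B hB hBtri
  have hg0 : f ∣ (b 0).comp a := by
    rw [← aux_mem_C, ← hgc 0, ← Polynomial.eq_C_of_natDegree_le_zero (hgd 0)]
    exact hgI 0
  have hb0 : b 0 = minpoly K (mulMat f a n) := by
    refine eq_of_monic_of_associated (hbm 0) hmin (associated_of_dvd_dvd ?_ ?_)
    · have := hdvd 0 _ hI0 (by simp)
      rwa [coeff_C_zero] at this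
    · exact minpoly.dvd _ _ ((aux_aeval_iff a hn hf _).2 hg0)
  have hb01 : b 0 ≠ 1 := by
    intro h
    rw [h, one_comp] at hg0
    have := natDegree_eq_zero_of_isUnit (isUnit_of_dvd_one hg0)
    omega
  have hbn : b n = 1 := by
    have h1 := hdvd n _ (aux_f_mem f a) (natDegree_map_le.trans hf.le)
    rw [coeff_map, ← hf] at h1
    have hf0 : f ≠ 0 := by rintro rfl; simp at hf; omega
    have h2 : IsUnit (C (f.coeff f.natDegree)) :=
      Polynomial.isUnit_C.2 (by simpa using hf0)
    rw [← hf]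
    exact (hbm _).eq_one_of_isUnit (isUnit_of_dvd_unit h1 h2)
  classical
  have hex : ∃ i, b i = 1 := ⟨n, hbn⟩
  have hfind : ∀ i, i < Nat.find hex ↔ b i ≠ 1 := by
    intro i
    constructor
    · exact fun h => Nat.find_min hex h
    · intro h
      by_contra hlt
      apply h
      have h1 := hchain _ _ (not_lt.1 hlt)
      rw [Nat.find_spec hex] at h1
      exact (hbm _).eq_one_of_isUnit (isUnit_of_dvd_one h1)
  refine ⟨?_, min m (Nat.find hex), ?_, ?_, ?_, ?_, ?_⟩
  · have h1 : ∀ i, ∃ c : K, c ≠ 0 ∧ B i i = C c * σ i := by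
      intro i
      obtain ⟨u, hu⟩ := (hdiag i).symm
      obtain ⟨c, hc, hcu⟩ := Polynomial.isUnit_iff.1 u.isUnit
      refine ⟨c, hc.ne_zero, ?_⟩
      rw [hσb, hcu, ← hu, mul_comm]
    choose c hc hc' using h1
    exact ⟨c, hc, hc'⟩
  · exact le_min hm ((hfind 0).2 hb01)
  · exact min_le_min le_rfl (Nat.find_le_iff _ _ |>.2 ⟨n, le_rfl, hbn⟩)
  · intro i
    rw [hσb, lt_min_iff, hfind, Nat.pos_iff_ne_zero, Ne, Ne, (hbm i).natDegree_eq_zero]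
    exact ⟨fun h => h.2, fun h => ⟨i.2, h⟩⟩
  · intro i h
    rw [hσb, hτb]
  · rw [hσb, hb0]
end
end

section
/- Let K be a field, f ∈ K[x] of degree n ≥ 1, a ∈ K[x] of degree < n, and ℓ, m ∈ {1, …, n}. A matrix D ∈ K[y]^{m×m} has columns forming a basis of the K[y]-module R_{ℓ,m}^{(a,f)} if and only if D is the denominator of some irreducible right fraction description N·D^{−1} of the rational matrix (I_ℓ 0)·(y·I_n − M_a)^{−1}·X ∈ K(y)^{ℓ×m}. Moreover, the denominator of any right fraction description of this matrix is a right multiple of any such D, i.e., equals D·W for some W ∈ K[y]^{m×m}. -/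
open Polynomial Matrix

noncomputable section

variable {K : Type*} [Field K]

/-- `v` represents an element of the truncated module of relations `R_{ℓ,m}^{(a,f)}`:
for every `k ≥ 0`, the coefficients of `x^0, …, x^(ℓ-1)` of `(a^k · r(x,a(x))) mod f` vanish. -/
def IsTruncRelation (f a : K[X]) (ℓ : ℕ) {m : ℕ} (v : Fin m → K[X]) : Prop :=
  ∀ (k j : ℕ), j < ℓ → ((a ^ k * relEval a v) % f).coeff j = 0

/-- The `n×m` matrix `X` whose top `m×m` block is the identity, over any `α`. -/
def Xup (α : Type*) [Zero α] [One α] (n m : ℕ) : Matrix (Fin n) (Fin m) α :=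
  fun i j => if (i : ℕ) = (j : ℕ) then 1 else 0

/-- The `ℓ×n` matrix `(I_ℓ 0)` whose left `ℓ×ℓ` block is the identity, over any `α`. -/
def projL (α : Type*) [Zero α] [One α] (ℓ n : ℕ) : Matrix (Fin ℓ) (Fin n) α :=
  fun i j => if (i : ℕ) = (j : ℕ) then 1 else 0

/-- The rational matrix `(I_ℓ 0) · (y I_n − M_a)⁻¹ · X ∈ K(y)^{ℓ×m}`. -/
def fracMat (f a : K[X]) (n ℓ m : ℕ) : Matrix (Fin ℓ) (Fin m) (RatFunc K) :=
  projL (RatFunc K) ℓ n *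
    ((charmatrix (mulMat f a n)).map (algebraMap K[X] (RatFunc K)))⁻¹ *
    Xup (RatFunc K) n m

/-- `v ∈ denom(F)`: every entry of `F·v` is a polynomial. -/
def memDenom {ℓ m : ℕ} (F : Matrix (Fin ℓ) (Fin m) (RatFunc K)) (v : Fin m → K[X]) : Prop :=
  ∀ i, ∃ p : K[X],
    F.mulVec (fun j => algebraMap K[X] (RatFunc K) (v j)) i = algebraMap K[X] (RatFunc K) p


/-- The columns of `D` form a basis of the truncated module of relations `R_{ℓ,m}^{(a,f)}`. -/
def IsTruncBasis (f a : K[X]) (ℓ : ℕ) {m : ℕ} (D : Matrix (Fin m) (Fin m) K[X]) : Prop :=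
  D.det ≠ 0 ∧ (∀ j, IsTruncRelation f a ℓ (fun i => D i j)) ∧
    ∀ v : Fin m → K[X], IsTruncRelation f a ℓ v →
      v ∈ Submodule.span K[X] (Set.range fun j => fun i => D i j)

/-- `N·D⁻¹` is a right fraction description of `F`. -/
def IsRightDesc {ℓ m : ℕ} (F : Matrix (Fin ℓ) (Fin m) (RatFunc K))
    (N : Matrix (Fin ℓ) (Fin m) K[X]) (D : Matrix (Fin m) (Fin m) K[X]) : Prop :=
  D.det ≠ 0 ∧ F * D.map (algebraMap K[X] (RatFunc K)) = N.map (algebraMap K[X] (RatFunc K))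

/-- The right fraction `N·D⁻¹` is irreducible: `N` and `D` are right coprime. -/
def IsIrreducibleRight {ℓ m : ℕ} (N : Matrix (Fin ℓ) (Fin m) K[X])
    (D : Matrix (Fin m) (Fin m) K[X]) : Prop :=
  ∃ (U : Matrix (Fin m) (Fin ℓ) K[X]) (V : Matrix (Fin m) (Fin m) K[X]), U * N + V * D = 1


theorem adj_degree_lt (n : ℕ) (M : Matrix (Fin n) (Fin n) K) (i j : Fin n) :
    ((charmatrix M).adjugate i j).degree < (n : WithBot ℕ) := by
  cases n with
  | zero => exact i.elim0
  | succ n =>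
    rw [adjugate_fin_succ_eq_det_submatrix]
    have h1 : (charmatrix M).submatrix j.succAbove i.succAbove =
        (X : K[X]) • ((1 : Matrix (Fin (n+1)) (Fin (n+1)) K).submatrix
          j.succAbove i.succAbove).map C
        + (-(M.submatrix j.succAbove i.succAbove)).map C := by
      ext1 p q
      simp [charmatrix_apply, Matrix.diagonal_apply, Matrix.one_apply, sub_eq_add_neg]
    have h2 := natDegree_det_X_add_C_le ((1 : Matrix (Fin (n+1)) (Fin (n+1)) K).submatrix
          j.succAbove i.succAbove) (-(M.submatrix j.succAbove i.succAbove))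
    rw [← h1, Fintype.card_fin] at h2
    have h3 : ((-1 : K[X]) ^ (j + i : ℕ) *
        det ((charmatrix M).submatrix j.succAbove i.succAbove)).natDegree ≤ n := by
      rcases neg_one_pow_eq_or K[X] (j + i : ℕ) with h | h <;> rw [h] <;> simpa using h2
    refine lt_of_le_of_lt (degree_le_of_natDegree_le h3) ?_
    exact_mod_cast Nat.lt_succ_self n

/-- Row `i` of the adjugate of the characteristic matrix applied to a constant vector. -/
def adjRow {n : ℕ} (M : Matrix (Fin n) (Fin n) K) (w : Fin n → K) : Fin n → K[X] :=
  (charmatrix M).adjugate *ᵥ (fun j => C (w j))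

theorem adjRow_degree_lt {n : ℕ} (M : Matrix (Fin n) (Fin n) K) (w : Fin n → K) (i : Fin n) :
    (adjRow M w i).degree < (n : WithBot ℕ) := by
  unfold adjRow mulVec dotProduct
  refine lt_of_le_of_lt (degree_sum_le _ _) ?_
  refine (Finset.sup_lt_iff (WithBot.bot_lt_coe n)).2 ?_
  intro j _
  refine lt_of_le_of_lt (degree_mul_le _ _) ?_
  refine lt_of_le_of_lt (add_le_add_right degree_C_le _) ?_
  rw [add_zero]
  exact adj_degree_lt n M i j

theorem charmatrix_mulVec_C {n : ℕ} (M : Matrix (Fin n) (Fin n) K) (w : Fin n → K) :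
    charmatrix M *ᵥ (fun j => C (w j)) =
      (X : K[X]) • (fun j => C (w j)) - (fun j => C ((M *ᵥ w) j)) := by
  have : (fun j => (C ((M *ᵥ w) j) : K[X])) = M.map C *ᵥ (fun j => C (w j)) := by
    ext1 j
    simp [mulVec, dotProduct]
  rw [this]
  unfold charmatrix
  rw [sub_mulVec]
  congr 1
  ext1 j
  simp [Matrix.scalar_apply, mulVec_diagonal]

theorem adjRow_mulVec {n : ℕ} (M : Matrix (Fin n) (Fin n) K) (w : Fin n → K) (i : Fin n) :
    adjRow M (M *ᵥ w) i = X * adjRow M w i - M.charpoly * C (w i) := by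
  have h := congrArg (fun v => ((charmatrix M).adjugate *ᵥ v) i) (charmatrix_mulVec_C M w)
  simp only [mulVec_mulVec, adjugate_mul, mulVec_sub, mulVec_smul] at h
  rw [smul_mulVec, one_mulVec] at h
  simp only [Pi.smul_apply, Pi.sub_apply, smul_eq_mul] at h
  unfold adjRow Matrix.charpoly
  rw [h]; ring

theorem dvd_adjRow_iff {n : ℕ} (M : Matrix (Fin n) (Fin n) K) (w : ℕ → Fin n → K)
    (hw : ∀ k, w (k + 1) = M *ᵥ w k) (i : Fin n) :
    M.charpoly ∣ adjRow M (w 0) i ↔ ∀ k, w k i = 0 := by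
  have hdeg : M.charpoly.degree = (n : WithBot ℕ) := by
    rw [charpoly_degree_eq_dim, Fintype.card_fin]
  constructor
  · intro h
    have h0 : ∀ w, M.charpoly ∣ adjRow M w i → adjRow M w i = 0 := fun w hd =>
      eq_zero_of_dvd_of_degree_lt hd (by rw [hdeg]; exact adjRow_degree_lt M w i)
    have step : ∀ k, adjRow M (w k) i = 0 → adjRow M (w (k+1)) i = 0 ∧ w k i = 0 := by
      intro k hk
      have e := adjRow_mulVec M (w k) i
      rw [← hw, hk, mul_zero, zero_sub] at e
      have e0 := h0 (w (k+1)) (by rw [e, dvd_neg]; exact dvd_mul_right _ _)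
      refine ⟨e0, ?_⟩
      rw [e0] at e
      have := (mul_eq_zero.mp (neg_eq_zero.mp e.symm)).resolve_left M.charpoly_monic.ne_zero
      exact C_eq_zero.mp this
    have all : ∀ k, adjRow M (w k) i = 0 := by
      intro k
      induction k with
      | zero => exact h0 _ h
      | succ k ih => exact (step k ih).1
    exact fun k => (step k (all k)).2
  · intro h
    have e : ∀ k, adjRow M (w k) i = X ^ k * adjRow M (w 0) i := by
      intro k
      induction k with
      | zero => simp
      | succ k ih => rw [hw, adjRow_mulVec, h k, ih, C_0]; ring
    have h1 := adjRow_degree_lt M (w n) i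
    by_cases hz : adjRow M (w 0) i = 0
    · rw [hz]; exact dvd_zero _
    · exfalso
      rw [e n, degree_mul, degree_X_pow, degree_eq_natDegree hz] at h1
      have : n + (adjRow M (w 0) i).natDegree < n := by exact_mod_cast h1
      omega

/-- Coefficient vector of `r mod f`. -/
def cvec (f : K[X]) (n : ℕ) (r : K[X]) : Fin n → K := fun i => (r % f).coeff (i : ℕ)

theorem cvec_add (f : K[X]) (n : ℕ) (r s : K[X]) :
    cvec f n (r + s) = cvec f n r + cvec f n s := by
  ext i; simp [cvec, add_mod]

theorem cvec_C_mul (f : K[X]) (n : ℕ) (c : K) (r : K[X]) :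
    cvec f n (C c * r) = c • cvec f n r := by
  ext i; simp [cvec, ← smul_eq_C_mul, mod_def, smul_modByMonic]

theorem cvec_zero (f : K[X]) (n : ℕ) : cvec f n 0 = 0 := by
  ext i; simp [cvec]

theorem cvec_sum (f : K[X]) (n : ℕ) {ι : Type*} (s : Finset ι) (r : ι → K[X]) :
    cvec f n (∑ i ∈ s, r i) = ∑ i ∈ s, cvec f n (r i) := by
  classical
  induction s using Finset.induction_on with
  | empty => simp [cvec_zero]
  | insert a s h ih => rw [Finset.sum_insert h, Finset.sum_insert h, cvec_add, ih]

theorem mulMat_cvec (f a r : K[X]) (n : ℕ) (hn : 1 ≤ n) (hf : f.natDegree = n) :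
    mulMat f a n *ᵥ cvec f n r = cvec f n (a * r) := by
  have hf0 : f ≠ 0 := by rintro rfl; simp at hf; omega
  have hd : (r % f).natDegree < n := by
    rw [← hf]
    exact natDegree_mod_lt r (by omega)
  have h1 : cvec f n (a * r) = cvec f n (a * (r % f)) := by
    ext i
    unfold cvec
    congr 1
    apply mod_eq_of_dvd_sub
    rw [← mul_sub]
    refine Dvd.dvd.mul_left ⟨r / f, ?_⟩ _
    rw [EuclideanDomain.mod_eq_sub_mul_div]; ring
  rw [h1]
  conv_rhs => rw [(r % f).as_sum_range_C_mul_X_pow' hd, Finset.mul_sum,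
    ← Fin.sum_univ_eq_sum_range (fun k => a * (C ((r % f).coeff k) * X ^ k)) n, cvec_sum]
  ext i
  simp only [mulVec, dotProduct, Finset.sum_apply]
  refine Finset.sum_congr rfl fun k _ => ?_
  rw [show a * (C ((r % f).coeff k) * X ^ (k : ℕ)) = C ((r % f).coeff k) * (X ^ (k : ℕ) * a) by ring,
    cvec_C_mul]
  simp [mulMat, cvec, mul_comm]

theorem relEval_add (a : K[X]) {m : ℕ} (u v : Fin m → K[X]) :
    relEval a (u + v) = relEval a u + relEval a v := by
  simp [relEval, mul_add, Finset.sum_add_distrib]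

theorem relEval_X_smul (a : K[X]) {m : ℕ} (v : Fin m → K[X]) :
    relEval a ((X : K[X]) • v) = a * relEval a v := by
  simp only [relEval, Finset.mul_sum, Pi.smul_apply, smul_eq_mul, mul_comp, X_comp]
  exact Finset.sum_congr rfl fun i _ => by ring

/-- Euclidean division of a vector by the characteristic matrix. -/
def DivGood (f a : K[X]) (n : ℕ) {m : ℕ} (v : Fin m → K[X]) : Prop :=
  ∃ q : Fin n → K[X], Xup K[X] n m *ᵥ v =
    charmatrix (mulMat f a n) *ᵥ q + (fun j => C (cvec f n (relEval a v) j))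

theorem divGood_add (f a : K[X]) (n : ℕ) {m : ℕ} (u v : Fin m → K[X])
    (hu : DivGood f a n u) (hv : DivGood f a n v) : DivGood f a n (u + v) := by
  obtain ⟨q, hq⟩ := hu
  obtain ⟨q', hq'⟩ := hv
  refine ⟨q + q', ?_⟩
  rw [mulVec_add, hq, hq', mulVec_add, relEval_add, cvec_add]
  ext1 j
  simp only [Pi.add_apply, C_add]
  ring

theorem divGood_X_smul (f a : K[X]) (n : ℕ) (hn : 1 ≤ n) (hf : f.natDegree = n) {m : ℕ}
    (v : Fin m → K[X]) (hv : DivGood f a n v) : DivGood f a n ((X : K[X]) • v) := by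
  obtain ⟨q, hq⟩ := hv
  refine ⟨(X : K[X]) • q + (fun j => C (cvec f n (relEval a v) j)), ?_⟩
  rw [mulVec_smul, hq, mulVec_add, mulVec_smul, charmatrix_mulVec_C, mulMat_cvec f a _ n hn hf,
    relEval_X_smul, smul_add]
  abel

theorem divGood_single_C (f a : K[X]) (n : ℕ) (hn : 1 ≤ n) (hf : f.natDegree = n) {m : ℕ}
    (hmn : m ≤ n) (i : Fin m) (c : K) : DivGood f a n (Pi.single i (C c) : Fin m → K[X]) := by
  have hf0 : f ≠ 0 := by rintro rfl; simp at hf; omega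
  refine ⟨0, ?_⟩
  have h : relEval a (Pi.single i (C c) : Fin m → K[X]) = C c * X ^ (i : ℕ) := by
    unfold relEval
    rw [Finset.sum_eq_single i]
    · rw [Pi.single_eq_same, C_comp, mul_comm]
    · intro b _ hb; simp [Pi.single_eq_of_ne hb]
    · simp
  have h2 : (X ^ (i : ℕ) : K[X]) % f = X ^ (i : ℕ) := by
    rw [mod_eq_self_iff hf0, degree_X_pow, degree_eq_natDegree hf0, hf]
    exact_mod_cast lt_of_lt_of_le i.2 hmn
  rw [h, cvec_C_mul, mulVec_zero, zero_add]
  ext1 j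
  simp only [mulVec_single, cvec, h2, Pi.smul_apply, coeff_X_pow, smul_eq_mul]
  have hX : Xup K[X] n m j i = if (j : ℕ) = (i : ℕ) then 1 else 0 := rfl
  by_cases hji : (j : ℕ) = (i : ℕ) <;> simp [hji, hX, Matrix.col]

theorem divGood_all (f a : K[X]) (n : ℕ) (hn : 1 ≤ n) (hf : f.natDegree = n) {m : ℕ}
    (hmn : m ≤ n) (v : Fin m → K[X]) : DivGood f a n v := by
  have h0 : DivGood f a n (0 : Fin m → K[X]) :=
    ⟨0, by ext1 j; simp [relEval, cvec]⟩
  have h1 : ∀ (i : Fin m) (p : K[X]), DivGood f a n (Pi.single i p : Fin m → K[X]) := by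
    intro i p
    induction p using Polynomial.induction_on with
    | C c => exact divGood_single_C f a n hn hf hmn i c
    | add p q hp hq => rw [Pi.single_add]; exact divGood_add _ _ _ _ _ hp hq
    | monomial k c ih =>
      have := divGood_X_smul f a n hn hf _ ih
      rw [← Pi.single_smul] at this
      have e : C c * X ^ (k + 1) = (X : K[X]) • (C c * X ^ k) := by
        rw [smul_eq_mul, pow_succ]; ring
      rw [e]; exact this
  rw [← Finset.univ_sum_single v]
  exact Finset.sum_induction _ _ (fun u v => divGood_add f a n u v) h0 fun i _ => h1 i _

theorem projL_mulVec {α : Type*} [CommRing α] (ℓ n : ℕ) (hln : ℓ ≤ n) (u : Fin n → α)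
    (i : Fin ℓ) : (projL α ℓ n *ᵥ u) i = u (Fin.castLE hln i) := by
  unfold mulVec dotProduct projL
  rw [Finset.sum_eq_single (Fin.castLE hln i)]
  · simp
  · intro b _ hb
    have : ¬ (i : ℕ) = (b : ℕ) := fun h => hb (Fin.ext h.symm)
    simp [this]
  · simp

theorem map_mulVec_alg {p q : ℕ} (A : Matrix (Fin p) (Fin q) K[X]) (v : Fin q → K[X]) :
    A.map (algebraMap K[X] (RatFunc K)) *ᵥ (fun j => algebraMap K[X] (RatFunc K) (v j)) =
      fun i => algebraMap K[X] (RatFunc K) ((A *ᵥ v) i) := by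
  ext1 i
  simp [mulVec, dotProduct]

theorem Xup_map (n m : ℕ) :
    (Xup K[X] n m).map (algebraMap K[X] (RatFunc K)) = Xup (RatFunc K) n m := by
  ext i j
  simp only [Xup, Matrix.map_apply]
  split_ifs <;> simp

theorem alg_inj : Function.Injective (algebraMap K[X] (RatFunc K)) :=
  IsFractionRing.injective K[X] (RatFunc K)

theorem trunc_iff_memDenom (n ℓ m : ℕ) (hn : 1 ≤ n) (hln : ℓ ≤ n) (hmn : m ≤ n)
    (f a : K[X]) (hf : f.natDegree = n) (v : Fin m → K[X]) :
    IsTruncRelation f a ℓ v ↔ memDenom (fracMat f a n ℓ m) v := by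
  obtain ⟨q, hq⟩ := divGood_all f a n hn hf hmn v
  set M := mulMat f a n with hM
  set w : ℕ → Fin n → K := fun k => cvec f n (a ^ k * relEval a v) with hwdef
  have hw : ∀ k, w (k + 1) = M *ᵥ w k := by
    intro k
    rw [hwdef, hM]
    simp only
    rw [mulMat_cvec f a _ n hn hf]
    congr 1; ring
  have hw0 : cvec f n (relEval a v) = w 0 := by simp [hwdef]
  rw [hw0] at hq
  let φ := algebraMap K[X] (RatFunc K)
  have hχ : φ M.charpoly ≠ 0 := by
    intro h
    exact M.charpoly_monic.ne_zero (alg_inj (h.trans (map_zero φ).symm))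
  have hdet : ((charmatrix M).map φ).det = φ M.charpoly := by
    rw [Matrix.charpoly, RingHom.map_det]; rfl
  have hinv : ((charmatrix M).map φ)⁻¹ * (charmatrix M).map φ = 1 :=
    nonsing_inv_mul _ (by rw [hdet]; exact hχ.isUnit)
  have hinv2 : ((charmatrix M).map φ)⁻¹ = (φ M.charpoly)⁻¹ • ((charmatrix M).adjugate).map φ := by
    rw [Matrix.inv_def, hdet, Ring.inverse_eq_inv']
    congr 1
    exact (RingHom.map_adjugate φ (charmatrix M)).symm
  have key : ∀ i : Fin ℓ, (fracMat f a n ℓ m *ᵥ fun j => φ (v j)) i =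
      φ (q (Fin.castLE hln i)) + (φ M.charpoly)⁻¹ * φ (adjRow M (w 0) (Fin.castLE hln i)) := by
    intro i
    unfold fracMat
    rw [← mulVec_mulVec, ← mulVec_mulVec, projL_mulVec ℓ n hln, ← Xup_map, map_mulVec_alg, hq]
    have : (fun i => φ ((charmatrix M *ᵥ q + fun j => C (w 0 j)) i)) =
        (charmatrix M).map φ *ᵥ (fun j => φ (q j)) + (fun j => φ (C (w 0 j))) := by
      rw [map_mulVec_alg]
      ext1 j
      simp [φ]
    change (((charmatrix M).map φ)⁻¹ *ᵥ
      (fun i => φ ((charmatrix M *ᵥ q + fun j => C (w 0 j)) i))) _ = _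
    rw [this, mulVec_add, mulVec_mulVec, hinv, one_mulVec, hinv2, smul_mulVec, map_mulVec_alg]
    rfl
  have iffrow : ∀ i : Fin ℓ, (∃ p : K[X], (fracMat f a n ℓ m *ᵥ fun j => φ (v j)) i = φ p) ↔
      M.charpoly ∣ adjRow M (w 0) (Fin.castLE hln i) := by
    intro i
    rw [key i]
    constructor
    · rintro ⟨p, hp⟩
      refine ⟨p - q (Fin.castLE hln i), alg_inj (K := K) ?_⟩
      change φ _ = φ _
      rw [map_mul, map_sub, ← hp]
      field_simp
      ring
    · rintro ⟨p, hp⟩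
      refine ⟨q (Fin.castLE hln i) + p, ?_⟩
      rw [hp, map_mul, map_add]
      field_simp
  constructor
  · intro h i
    refine (iffrow i).2 ((dvd_adjRow_iff M w hw _).2 fun k => ?_)
    exact h k i i.2
  · intro h k j hj
    exact (dvd_adjRow_iff M w hw _).1 ((iffrow ⟨j, hj⟩).1 (h ⟨j, hj⟩)) k

theorem exists_gcrd {ℓ m : ℕ} (N : Matrix (Fin ℓ) (Fin m) K[X])
    (D : Matrix (Fin m) (Fin m) K[X]) :
    ∃ (G : Matrix (Fin m) (Fin m) K[X]) (N₁ : Matrix (Fin ℓ) (Fin m) K[X])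
      (D₁ : Matrix (Fin m) (Fin m) K[X]) (U : Matrix (Fin m) (Fin ℓ) K[X])
      (V : Matrix (Fin m) (Fin m) K[X]),
      N = N₁ * G ∧ D = D₁ * G ∧ U * N + V * D = G := by
  let L : Submodule K[X] (Fin m → K[X]) :=
    Submodule.span K[X] (Set.range fun i => N i) ⊔ Submodule.span K[X] (Set.range fun i => D i)
  obtain ⟨k, S⟩ := Submodule.smithNormalForm (Pi.basisFun K[X] (Fin m)) L
  let G : Matrix (Fin m) (Fin m) K[X] :=
    Function.extend S.f (fun k => ((S.bN k : L) : Fin m → K[X])) 0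
  have hGL : ∀ i, G i ∈ L := by
    intro i
    by_cases h : ∃ k, S.f k = i
    · obtain ⟨k, rfl⟩ := h
      change Function.extend _ _ _ _ ∈ L
      rw [S.f.injective.extend_apply]
      exact (S.bN k).2
    · change Function.extend _ _ _ _ ∈ L
      rw [Function.extend_apply' _ _ _ h]
      exact L.zero_mem
  have hLG : ∀ v ∈ L, ∃ c : Fin m → K[X], ∑ i, c i • G i = v := by
    intro v hv
    rw [← Submodule.mem_span_range_iff_exists_fun]
    have := congrArg (Subtype.val) (S.bN.sum_repr ⟨v, hv⟩)
    rw [← show _ = v from this]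
    rw [AddSubmonoidClass.coe_finsetSum]
    refine Submodule.sum_mem _ fun k _ => ?_
    refine Submodule.smul_mem _ _ (Submodule.subset_span ⟨S.f k, ?_⟩)
    exact S.f.injective.extend_apply _ _ _
  have hmul : ∀ {p q : ℕ} (A : Matrix (Fin p) (Fin q) K[X]) (B : Matrix (Fin q) (Fin m) K[X])
      (i : Fin p), (A * B) i = ∑ j, A i j • B j := by
    intro p q A B i
    ext1 j
    simp [Matrix.mul_apply, Finset.sum_apply]
  have hN : ∀ i, ∃ c : Fin m → K[X], ∑ j, c j • G j = N i := fun i =>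
    hLG _ (Submodule.mem_sup_left (Submodule.subset_span ⟨i, rfl⟩))
  have hD : ∀ i, ∃ c : Fin m → K[X], ∑ j, c j • G j = D i := fun i =>
    hLG _ (Submodule.mem_sup_right (Submodule.subset_span ⟨i, rfl⟩))
  have hG : ∀ i, ∃ (c : Fin ℓ → K[X]) (d : Fin m → K[X]),
      ∑ j, c j • N j + ∑ j, d j • D j = G i := by
    intro i
    obtain ⟨x, hx, y, hy, hxy⟩ := Submodule.mem_sup.1 (hGL i)
    obtain ⟨c, hc⟩ := (Submodule.mem_span_range_iff_exists_fun _).1 hx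
    obtain ⟨d, hd⟩ := (Submodule.mem_span_range_iff_exists_fun _).1 hy
    exact ⟨c, d, by rw [hc, hd, hxy]⟩
  choose N₁ hN₁ using hN
  choose D₁ hD₁ using hD
  choose U V hUV using hG
  refine ⟨G, N₁, D₁, U, V, ?_, ?_, ?_⟩
  · funext i; exact ((hmul N₁ G i).trans (hN₁ i)).symm
  · funext i; exact ((hmul D₁ G i).trans (hD₁ i)).symm
  · funext i
    refine Eq.trans ?_ (hUV i)
    exact congrArg₂ (· + ·) (hmul U N i) (hmul V D i)

theorem memDenom_iff {ℓ m : ℕ} (F : Matrix (Fin ℓ) (Fin m) (RatFunc K)) (v : Fin m → K[X]) :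
    memDenom F v ↔ ∃ p : Fin ℓ → K[X], F *ᵥ (fun j => algebraMap K[X] (RatFunc K) (v j)) =
      fun i => algebraMap K[X] (RatFunc K) (p i) := by
  unfold memDenom
  constructor
  · intro h
    choose p hp using h
    exact ⟨p, funext hp⟩
  · rintro ⟨p, hp⟩ i
    exact ⟨p i, congrFun hp i⟩

theorem cols_memDenom_iff {ℓ m k : ℕ} (F : Matrix (Fin ℓ) (Fin m) (RatFunc K))
    (D : Matrix (Fin m) (Fin k) K[X]) :
    (∀ j, memDenom F (fun i => D i j)) ↔ ∃ N : Matrix (Fin ℓ) (Fin k) K[X],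
      F * D.map (algebraMap K[X] (RatFunc K)) = N.map (algebraMap K[X] (RatFunc K)) := by
  constructor
  · intro h
    choose N hN using h
    refine ⟨fun i j => N j i, ?_⟩
    ext i j
    exact hN j i
  · rintro ⟨N, hN⟩ j i
    exact ⟨N i j, congrFun (congrFun hN i) j⟩

theorem mem_colspan_iff {m : ℕ} (D : Matrix (Fin m) (Fin m) K[X]) (v : Fin m → K[X]) :
    v ∈ Submodule.span K[X] (Set.range fun j => fun i => D i j) ↔ ∃ c, v = D *ᵥ c := by
  rw [Submodule.mem_span_range_iff_exists_fun]
  have : ∀ c : Fin m → K[X], ∑ j, c j • (fun i => D i j) = D *ᵥ c := by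
    intro c
    ext1 i
    simp [mulVec, dotProduct, mul_comm]
  simp only [this, eq_comm]

theorem exists_right_mul {m : ℕ} (D D' : Matrix (Fin m) (Fin m) K[X])
    (h : ∀ j, (fun i => D' i j) ∈ Submodule.span K[X] (Set.range fun j => fun i => D i j)) :
    ∃ W : Matrix (Fin m) (Fin m) K[X], D' = D * W := by
  simp only [mem_colspan_iff] at h
  choose W hW using h
  refine ⟨fun i j => W j i, ?_⟩
  ext1 i j
  exact congrFun (hW j) i

theorem truncBasis_iff_irreducible_denominator
    (n ℓ m : ℕ) (hn : 1 ≤ n) (hl : 1 ≤ ℓ) (hln : ℓ ≤ n) (hm : 1 ≤ m) (hmn : m ≤ n)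
    (f a : K[X]) (hf : f.natDegree = n) (ha : a.degree < (n : WithBot ℕ))
    (D : Matrix (Fin m) (Fin m) K[X]) :
    (IsTruncBasis f a ℓ D ↔
      ∃ N, IsRightDesc (fracMat f a n ℓ m) N D ∧ IsIrreducibleRight N D) ∧
    (IsTruncBasis f a ℓ D →
      ∀ (N' : Matrix (Fin ℓ) (Fin m) K[X]) (D' : Matrix (Fin m) (Fin m) K[X]),
        IsRightDesc (fracMat f a n ℓ m) N' D' →
          ∃ W : Matrix (Fin m) (Fin m) K[X], D' = D * W) := by
  have hT := trunc_iff_memDenom n ℓ m hn hln hmn f a hf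
  generalize fracMat f a n ℓ m = F at hT
  have more : IsTruncBasis f a ℓ D →
      ∀ (N' : Matrix (Fin ℓ) (Fin m) K[X]) (D' : Matrix (Fin m) (Fin m) K[X]),
        F * D'.map (algebraMap K[X] (RatFunc K)) = N'.map (algebraMap K[X] (RatFunc K)) →
          ∃ W : Matrix (Fin m) (Fin m) K[X], D' = D * W := by
    rintro ⟨-, -, hspan⟩ N' D' h
    refine exists_right_mul D D' fun j => hspan _ ((hT _).2 ?_)
    exact (cols_memDenom_iff F D').2 ⟨N', h⟩ j
  refine ⟨⟨?_, ?_⟩, fun h N' D' h' => more h N' D' h'.2⟩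
  · intro h
    obtain ⟨hdet, hcols, hspan⟩ := id h
    obtain ⟨N, hN⟩ := (cols_memDenom_iff F D).1 fun j => (hT _).1 (hcols j)
    refine ⟨N, ⟨hdet, hN⟩, ?_⟩
    obtain ⟨G, N₁, D₁, U, V, hNG, hDG, hUV⟩ := exists_gcrd N D
    have hGdet : G.det ≠ 0 := by
      intro h0
      apply hdet
      rw [hDG, det_mul, h0, mul_zero]
    have hGu : IsUnit (G.map (algebraMap K[X] (RatFunc K))).det := by
      have : (G.map (algebraMap K[X] (RatFunc K))).det = algebraMap K[X] (RatFunc K) G.det := by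
        rw [RingHom.map_det]; rfl
      rw [this]
      refine IsUnit.mk0 _ fun h0 => hGdet (alg_inj (h0.trans (map_zero _).symm))
    have h1 : F * D₁.map (algebraMap K[X] (RatFunc K)) =
        N₁.map (algebraMap K[X] (RatFunc K)) := by
      rw [hNG] at hN
      nth_rewrite 1 [hDG] at hN
      rw [Matrix.map_mul, Matrix.map_mul, ← Matrix.mul_assoc] at hN
      have := congrArg (fun A => A * (G.map (algebraMap K[X] (RatFunc K)))⁻¹) hN
      simpa only [Matrix.mul_nonsing_inv_cancel_right _ _ hGu] using this
    obtain ⟨W, hW⟩ := more h N₁ D₁ h1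
    have hWG : W * G = 1 := by
      have e : D * (W * G) = D * 1 := by
        rw [← Matrix.mul_assoc, ← hW, ← hDG, Matrix.mul_one]
      have e2 := congrArg (fun A => D.adjugate * A) e
      simp only [← Matrix.mul_assoc, adjugate_mul] at e2
      simp only [Matrix.smul_mul, Matrix.one_mul, Matrix.mul_one] at e2
      ext1 i j
      have e3 := congrFun (congrFun e2 i) j
      simp only [Matrix.smul_apply, smul_eq_mul] at e3
      exact mul_left_cancel₀ hdet e3
    refine ⟨W * U, W * V, ?_⟩
    rw [Matrix.mul_assoc, Matrix.mul_assoc, ← Matrix.mul_add, hUV, hWG]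
  · rintro ⟨N, ⟨hdet, hN⟩, U, V, hUV⟩
    refine ⟨hdet, fun j => (hT _).2 ((cols_memDenom_iff F D).2 ⟨N, hN⟩ j), fun v hv => ?_⟩
    rw [mem_colspan_iff]
    obtain ⟨p, hp⟩ := (memDenom_iff F v).1 ((hT v).1 hv)
    have hDu : IsUnit (D.map (algebraMap K[X] (RatFunc K))).det := by
      have : (D.map (algebraMap K[X] (RatFunc K))).det = algebraMap K[X] (RatFunc K) D.det := by
        rw [RingHom.map_det]; rfl
      rw [this]
      refine IsUnit.mk0 _ fun h0 => hdet (alg_inj (h0.trans (map_zero _).symm))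
    refine ⟨U *ᵥ p + V *ᵥ v, ?_⟩
    set x := (D.map (algebraMap K[X] (RatFunc K)))⁻¹ *ᵥ
      (fun j => algebraMap K[X] (RatFunc K) (v j)) with hx
    have hDx : D.map (algebraMap K[X] (RatFunc K)) *ᵥ x =
        (fun j => algebraMap K[X] (RatFunc K) (v j)) := by
      rw [hx, mulVec_mulVec, mul_nonsing_inv _ hDu, one_mulVec]
    have hNx : N.map (algebraMap K[X] (RatFunc K)) *ᵥ x =
        (fun j => algebraMap K[X] (RatFunc K) (p j)) := by
      rw [← hN, ← mulVec_mulVec, hDx, hp]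
    have hxe : x = fun j => algebraMap K[X] (RatFunc K) ((U *ᵥ p + V *ᵥ v) j) := by
      have e : U.map (algebraMap K[X] (RatFunc K)) * N.map (algebraMap K[X] (RatFunc K)) +
          V.map (algebraMap K[X] (RatFunc K)) * D.map (algebraMap K[X] (RatFunc K)) = 1 := by
        rw [← Matrix.map_mul, ← Matrix.map_mul, ← Matrix.map_add _ (map_add _), hUV,
          Matrix.map_one _ (map_zero _) (map_one _)]
      have e2 := congrArg (fun A => A *ᵥ x) e
      simp only [add_mulVec, one_mulVec, ← mulVec_mulVec] at e2
      rw [hDx, hNx, map_mulVec_alg, map_mulVec_alg] at e2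
      rw [← e2]
      ext1 j
      simp
    rw [hxe, map_mulVec_alg] at hDx
    ext1 j
    exact alg_inj (congrFun hDx j).symm
end
end

section
/- Let K be a field, f ∈ K[x] of degree n ≥ 1, a ∈ K[x] of degree < n, 1 ≤ m ≤ n, and d ≥ 1. Then rank Hk_{m,d}(a,f) ≤ ν_{m,m}, where ν_{m,m} denotes the determinantal degree of the K[y]-submodule R_{m,m}^{(a,f)} of K[y]^m, and equality rank Hk_{m,d}(a,f) = ν_{m,m} holds if and only if H(y) = X^T·(y·I_n − M_a)^{−1}·X is describable in degree d. -/
open Polynomial Matrix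

noncomputable section

variable {K : Type*} [Field K]

/-- Degree of a polynomial matrix: the maximum of the degrees of its entries. -/
def matDeg {ι κ : Type*} [Fintype ι] [Fintype κ] (M : Matrix ι κ K[X]) : WithBot ℕ :=
  Finset.univ.sup fun p : ι × κ => (M p.1 p.2).degree

/-- `D̂⁻¹·N̂` is a left fraction description of `F`. -/
def IsLeftDesc {ℓ m : ℕ} (F : Matrix (Fin ℓ) (Fin m) (RatFunc K))
    (Dh : Matrix (Fin ℓ) (Fin ℓ) K[X]) (Nh : Matrix (Fin ℓ) (Fin m) K[X]) : Prop :=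
  Dh.det ≠ 0 ∧ Dh.map (algebraMap K[X] (RatFunc K)) * F = Nh.map (algebraMap K[X] (RatFunc K))

/-- `F` is describable in degree `d`. -/
def DescribableInDegree {ℓ m : ℕ} (F : Matrix (Fin ℓ) (Fin m) (RatFunc K)) (d : ℕ) : Prop :=
  (∃ N D, IsRightDesc F N D ∧ matDeg D ≤ (d : WithBot ℕ)) ∧
    (∃ Dh Nh, IsLeftDesc F Dh Nh ∧ matDeg Dh ≤ (d : WithBot ℕ))

/-- The block Hankel matrix `Hk_{m,d}(a,f)`, indexed by `Fin d × Fin m`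
(block row/column index first): its `((i,r),(j,c))` entry is `(Xᵀ · M_a^(i+j) · X) r c`. -/
def hankelMat (f a : K[X]) (n m d : ℕ) :
    Matrix (Fin d × Fin m) (Fin d × Fin m) K :=
  fun p q => ((Xup K n m)ᵀ * (mulMat f a n) ^ ((p.1 : ℕ) + (q.1 : ℕ)) * Xup K n m) p.2 q.2


theorem aux_finite_quot {g : K[X]} (hg : g ≠ 0) :
    FiniteDimensional K (K[X] ⧸ Ideal.span ({g} : Set K[X])) :=
  PowerBasis.finite <| AdjoinRoot.powerBasis hg

theorem aux_span_range {m : ℕ} (D : Matrix (Fin m) (Fin m) K[X]) :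
    Submodule.span K[X] (Set.range fun j => fun i => D i j) = LinearMap.range D.mulVecLin := by
  rw [Matrix.range_mulVecLin]; rfl

theorem aux_finrank_quot {m : ℕ} (D : Matrix (Fin m) (Fin m) K[X]) (hD : D.det ≠ 0) :
    FiniteDimensional K ((Fin m → K[X]) ⧸ (LinearMap.range D.mulVecLin)) ∧
    Module.finrank K ((Fin m → K[X]) ⧸ (LinearMap.range D.mulVecLin)) = D.det.natDegree := by
  have hinj : Function.Injective D.mulVecLin := by
    intro x y h
    exact Matrix.mulVec_injective_of_det_ne_zero hD h
  let e := LinearEquiv.ofInjective D.mulVecLin hinj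
  have hr : Module.finrank K[X] (LinearMap.range D.mulVecLin) = Module.finrank K[X] (Fin m → K[X]) :=
    e.finrank_eq.symm
  let b := Pi.basisFun K[X] (Fin m)
  have hne := fun i => Submodule.smithNormalFormCoeffs_ne_zero b hr i
  have hfin := fun i => aux_finite_quot (hne i)
  let b' := Submodule.smithNormalFormTopBasis b hr
  let ab := Submodule.smithNormalFormBotBasis b hr
  have hdef := Submodule.smithNormalFormBotBasis_def b hr
  constructor
  · exact Module.Finite.equiv
      ((Submodule.quotientEquivPiSpan _ b hr).restrictScalars K).symm
  · rw [Submodule.finrank_quotient_eq_sum K b hr]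
    have hass : Associated D.det (∏ i, Submodule.smithNormalFormCoeffs b hr i) := by
      rw [← Matrix.det_diagonal, ← LinearMap.det_toLin' D, ← LinearMap.det_toLin b' (Matrix.diagonal _)]
      refine (LinearMap.associated_det_of_eq_comp
        ((b'.equiv ab (Equiv.refl _)).trans e.symm) _ _ ?_).symm
      intro x
      have h1 : ∀ z, (Matrix.toLin' D) (e.symm z) = (z : Fin m → K[X]) := by
        intro z
        have := congrArg Subtype.val (e.apply_symm_apply z)
        exact this
      rw [LinearEquiv.trans_apply, h1]
      have : (Matrix.toLin b' b' (Matrix.diagonal (Submodule.smithNormalFormCoeffs b hr))) =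
          (Submodule.subtype _).comp (b'.equiv ab (Equiv.refl _)).toLinearMap := by
        refine b'.ext fun i => ?_
        rw [Matrix.toLin_self]
        simp [Matrix.diagonal_apply, ite_smul, ab, hdef, b']
      rw [this]; rfl
    rw [natDegree_eq_of_degree_eq (degree_eq_degree_of_associated hass),
      natDegree_prod _ _ fun i _ => hne i]
    congr with i
    exact (AdjoinRoot.powerBasis (hne i)).finrank

theorem aux_rank_comp {A Q C : Type*} [AddCommGroup A] [Module K A] [AddCommGroup Q] [Module K Q]
    [AddCommGroup C] [Module K C] [FiniteDimensional K Q] (p : A →ₗ[K] Q) (g : Q →ₗ[K] C) :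
    Module.finrank K (LinearMap.range (g ∘ₗ p)) ≤ Module.finrank K Q ∧
    (Module.finrank K (LinearMap.range (g ∘ₗ p)) = Module.finrank K Q ↔
      Function.Injective g ∧ Function.Surjective p) := by
  have h1 : Module.finrank K (LinearMap.range (g ∘ₗ p)) ≤ Module.finrank K (LinearMap.range p) := by
    rw [LinearMap.range_comp]
    exact Submodule.finrank_map_le _ _
  have h2 : Module.finrank K (LinearMap.range p) ≤ Module.finrank K Q := Submodule.finrank_le _
  have h3 : Module.finrank K (LinearMap.range (g ∘ₗ p)) ≤ Module.finrank K (LinearMap.range g) :=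
    Submodule.finrank_mono (LinearMap.range_comp_le_range _ _)
  have h4 := LinearMap.finrank_range_add_finrank_ker g
  refine ⟨h1.trans h2, fun h => ⟨?_, ?_⟩, fun ⟨hg, hp⟩ => ?_⟩
  · rw [← LinearMap.ker_eq_bot]
    apply Submodule.finrank_eq_zero.mp
    omega
  · rw [← LinearMap.range_eq_top]
    apply Submodule.eq_top_of_finrank_eq
    omega
  · rw [LinearMap.range_comp, LinearMap.range_eq_top.mpr hp, Submodule.map_top]
    exact LinearMap.finrank_range_of_inj hg

/-- division by a nonsingular polynomial matrix -/
theorem aux_division {m d : ℕ} (D : Matrix (Fin m) (Fin m) K[X]) (hD : D.det ≠ 0)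
    (hdeg : ∀ i j, (D i j).degree ≤ (d : WithBot ℕ)) (v : Fin m → K[X]) :
    ∃ q : Fin m → K[X], ∀ i, ((v - D *ᵥ q) i).degree < (d : WithBot ℕ) := by
  refine ⟨fun i => (D.adjugate *ᵥ v) i / D.det, fun i => ?_⟩
  set q : Fin m → K[X] := fun i => (D.adjugate *ᵥ v) i / D.det
  set s : Fin m → K[X] := fun i => (D.adjugate *ᵥ v) i % D.det
  have h0 : D.adjugate *ᵥ v = D.det • q + s := by
    ext1 i
    simp only [q, s, Pi.add_apply, Pi.smul_apply, smul_eq_mul]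
    exact (EuclideanDomain.div_add_mod _ _).symm
  have h1 : D.det • v = D.det • (D *ᵥ q) + D *ᵥ s := by
    have := congrArg (fun z => D *ᵥ z) h0
    simpa [Matrix.mulVec_mulVec, Matrix.mul_adjugate, Matrix.mulVec_add, Matrix.mulVec_smul,
      Matrix.smul_mulVec] using this
  have h2 : D.det * (v - D *ᵥ q) i = (D *ᵥ s) i := by
    have := congrFun h1 i
    simp only [Pi.smul_apply, Pi.add_apply, smul_eq_mul, Pi.sub_apply] at this ⊢
    rw [mul_sub, this]; ring
  have h3 : ((D *ᵥ s) i).degree < (d : WithBot ℕ) + D.det.degree := by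
    rw [Matrix.mulVec, dotProduct]
    refine (Polynomial.degree_sum_le _ _).trans_lt ?_
    rw [Finset.sup_lt_iff]
    · intro j _
      rw [degree_mul]
      have hs : (s j).degree < D.det.degree := EuclideanDomain.mod_lt _ hD
      have := hdeg i j
      rw [degree_eq_natDegree hD] at *
      by_cases hz : D i j = 0
      · simp [hz]
      by_cases hz' : s j = 0
      · simp [hz']
      rw [degree_eq_natDegree hz] at *
      rw [degree_eq_natDegree hz'] at *
      norm_cast at *
      omega
    · rw [degree_eq_natDegree hD]; exact_mod_cast WithBot.bot_lt_coe _
  rw [← h2, degree_mul, add_comm] at h3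
  rw [degree_eq_natDegree hD] at h3
  by_cases hz : (v - D *ᵥ q) i = 0
  · rw [hz]; simp
  · rw [degree_eq_natDegree hz] at *
    norm_cast at *
    omega


/-- a monic-leading matrix has nonzero determinant -/
theorem aux_det_ne {m d : ℕ} (D : Matrix (Fin m) (Fin m) K[X])
    (hdeg : ∀ i j, (D i j - if i = j then X ^ d else 0).degree < (d : WithBot ℕ)) :
    D.det ≠ 0 := by
  intro h0
  obtain ⟨v, hv, hDv⟩ := Matrix.exists_mulVec_eq_zero_iff.mpr h0
  obtain ⟨i0, hi0⟩ := Function.ne_iff.mp hv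
  obtain ⟨i, -, hi⟩ := Finset.exists_max_image Finset.univ (fun i => (v i).degree) ⟨i0, by simp⟩
  have hvi : v i ≠ 0 := by
    intro h
    have := hi i0 (Finset.mem_univ _)
    rw [h, degree_zero, le_bot_iff, degree_eq_bot] at this
    exact hi0 this
  have h1 := congrFun hDv i
  rw [Matrix.mulVec, dotProduct] at h1
  have h2 : X ^ d * v i = - ∑ j, (D i j - if i = j then X ^ d else 0) * v j := by
    simp only [sub_mul, Finset.sum_sub_distrib, ite_mul, zero_mul, Finset.sum_ite_eq,
      Finset.mem_univ, if_true, h1]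
    simp
  have h3 : (X ^ d * v i).degree < (d : WithBot ℕ) + (v i).degree := by
    rw [h2, degree_neg]
    refine (Polynomial.degree_sum_le _ _).trans_lt ?_
    rw [Finset.sup_lt_iff]
    · intro j _
      rw [degree_mul]
      have := hdeg i j
      have h5 := hi j (Finset.mem_univ _)
      rw [degree_eq_natDegree hvi] at *
      set E := (D i j - if i = j then X ^ d else 0)
      by_cases hz : E = 0
      · simp [hz]
      by_cases hz' : v j = 0
      · simp [hz']
      rw [degree_eq_natDegree hz] at *
      rw [degree_eq_natDegree hz'] at *
      norm_cast at *
      omega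
    · rw [degree_eq_natDegree hvi]; exact_mod_cast WithBot.bot_lt_coe _
  rw [degree_mul, degree_X_pow] at h3
  exact lt_irrefl _ h3

local notation "ιK" => algebraMap K[X] (RatFunc K)

theorem aux_ratl_pow {W : Type*} [AddCommGroup W] [Module K W]
    (T : Module.End K W) (p : W →ₗ[K] K) (S : W →ₗ[K] RatFunc K)
    (hS : ∀ w, S (T w) = ιK X * S w - ιK (C (p w))) (w : W) (k : ℕ) :
    ∃ t : K[X], t.degree < (k : WithBot ℕ) ∧ ιK (X ^ k) * S w = S ((T ^ k) w) + ιK t := by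
  induction k with
  | zero => exact ⟨0, by simp, by simp⟩
  | succ k ih =>
    obtain ⟨t, ht, h⟩ := ih
    refine ⟨C (p ((T ^ k) w)) + X * t, ?_, ?_⟩
    · refine (degree_add_le _ _).trans_lt (max_lt ?_ ?_)
      · exact degree_C_le.trans_lt (by exact_mod_cast Nat.succ_pos k)
      · by_cases hz : t = 0
        · simp [hz]
        rw [degree_mul, degree_X]
        rw [degree_eq_natDegree hz] at *
        norm_cast at *
        omega
    · have e : (T ^ (k+1)) w = T ((T ^ k) w) := by rw [pow_succ', Module.End.mul_apply]
      rw [e, hS, pow_succ', map_mul, mul_assoc, h, map_add, map_mul]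
      ring

theorem aux_smul_eq (c : K) (z : RatFunc K) : c • z = ιK (C c) * z := by
  rw [← Algebra.smul_def, ← Polynomial.algebraMap_eq, algebraMap_smul]

theorem aux_ratl_poly {W : Type*} [AddCommGroup W] [Module K W]
    (T : Module.End K W) (p : W →ₗ[K] K) (S : W →ₗ[K] RatFunc K)
    (hS : ∀ w, S (T w) = ιK X * S w - ιK (C (p w))) (w : W) (q : K[X]) (N : ℕ)
    (hq : q.natDegree ≤ N) :
    ∃ t : K[X], t.degree < (N : WithBot ℕ) ∧ ιK q * S w = S (aeval T q w) + ιK t := by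
  choose t ht h using aux_ratl_pow T p S hS w
  refine ⟨∑ k ∈ Finset.range (N + 1), C (q.coeff k) * t k, ?_, ?_⟩
  · refine (Polynomial.degree_sum_le _ _).trans_lt ?_
    rw [Finset.sup_lt_iff (by exact_mod_cast WithBot.bot_lt_coe _)]
    intro k hk
    rw [← smul_eq_C_mul]
    refine (degree_smul_le _ _).trans_lt ((ht k).trans_le ?_)
    have := Finset.mem_range.mp hk
    exact_mod_cast (by omega : k ≤ N)
  · have hs := q.as_sum_range_C_mul_X_pow' (n := N + 1) (by omega)
    conv_lhs => rw [hs]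
    have e : aeval T q w = ∑ k ∈ Finset.range (N + 1), q.coeff k • (T ^ k) w := by
      rw [aeval_eq_sum_range' (n := N + 1) (by omega)]
      simp [LinearMap.sum_apply]
    rw [e, map_sum, map_sum, map_sum, Finset.sum_mul, ← Finset.sum_add_distrib]
    refine Finset.sum_congr rfl fun k _ => ?_
    rw [map_mul, mul_assoc, h, map_smul, aux_smul_eq, map_mul]
    ring

theorem aux_ratl_zero {W : Type*} [AddCommGroup W] [Module K W] [FiniteDimensional K W]
    (T : Module.End K W) (p : W →ₗ[K] K) (S : W →ₗ[K] RatFunc K)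
    (hS : ∀ w, S (T w) = ιK X * S w - ιK (C (p w))) (w : W) (s : K[X]) (hs : S w = ιK s) : s = 0 := by
  have hmon := minpoly.monic (Algebra.IsIntegral.isIntegral (R := K) T)
  obtain ⟨t, ht, h⟩ := aux_ratl_poly T p S hS w (minpoly K T) _ le_rfl
  rw [minpoly.aeval, hs, ← map_mul, LinearMap.zero_apply, map_zero, zero_add] at h
  have h' := RatFunc.algebraMap_injective K h
  rw [← h', degree_mul, ← degree_eq_natDegree hmon.ne_zero] at ht
  by_contra hne
  rw [degree_eq_natDegree hne, degree_eq_natDegree hmon.ne_zero] at ht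
  norm_cast at ht
  omega

theorem aux_ratl_iff {W : Type*} [AddCommGroup W] [Module K W] [FiniteDimensional K W]
    (T : Module.End K W) (p : W →ₗ[K] K) (S : W →ₗ[K] RatFunc K)
    (hS : ∀ w, S (T w) = ιK X * S w - ιK (C (p w))) (w : W) :
    (∃ s, S w = ιK s) ↔ ∀ k : ℕ, p ((T ^ k) w) = 0 := by
  constructor
  · rintro ⟨s, hs⟩ k
    induction k generalizing w s with
    | zero =>
      have h0 := aux_ratl_zero T p S hS w s hs
      have h1 := hS w
      rw [hs, h0, map_zero, mul_zero, zero_sub, ← map_neg] at h1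
      have := aux_ratl_zero T p S hS _ _ h1
      simpa using this
    | succ k ih =>
      have := ih (T w) (X * s - C (p w)) (by rw [hS, hs]; simp)
      rwa [pow_succ, Module.End.mul_apply]
  · intro h
    refine ⟨0, ?_⟩
    have h1 : ∀ k : ℕ, S ((T ^ k) w) = ιK (X ^ k) * S w := by
      intro k
      induction k with
      | zero => simp
      | succ k ih =>
        rw [pow_succ', Module.End.mul_apply, hS, h k, ih, pow_succ', map_mul]
        simp [mul_assoc]
    have h2 : ∀ q : K[X], S (aeval T q w) = ιK q * S w := by
      intro q
      induction q using Polynomial.induction_on' with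
      | add a b ha hb => simp [ha, hb, add_mul]
      | monomial k c =>
        rw [aeval_monomial, Module.algebraMap_end_eq_smul_id, ← C_mul_X_pow_eq_monomial, map_mul,
          mul_assoc, ← h1, ← aux_smul_eq, ← map_smul]
        rfl
    have h3 := h2 (minpoly K T)
    have hmon := minpoly.monic (Algebra.IsIntegral.isIntegral (R := K) T)
    rw [minpoly.aeval, LinearMap.zero_apply, map_zero, eq_comm, mul_eq_zero] at h3
    rcases h3 with h3 | h3
    · exact absurd ((map_eq_zero_iff _ (RatFunc.algebraMap_injective K)).mp h3) hmon.ne_zero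
    · simpa using h3

theorem aux_ratl_comb {W : Type*} [AddCommGroup W] [Module K W] [FiniteDimensional K W]
    (T : Module.End K W) (p : W →ₗ[K] K) (S : W →ₗ[K] RatFunc K)
    (hS : ∀ w, S (T w) = ιK X * S w - ιK (C (p w))) {m : ℕ} (x : Fin m → W) (v : Fin m → K[X]) :
    (∃ s, ∑ c, ιK (v c) * S (x c) = ιK s) ↔ ∀ k : ℕ, p ((T ^ k) (∑ c, aeval T (v c) (x c))) = 0 := by
  rw [← aux_ratl_iff T p S hS]
  choose t ht h using fun c => aux_ratl_poly T p S hS (x c) (v c) _ le_rfl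
  simp only [h, Finset.sum_add_distrib, map_sum]
  constructor
  · rintro ⟨s, hs⟩
    exact ⟨s - ∑ c, t c, by rw [map_sub, ← hs, map_sum]; ring⟩
  · rintro ⟨s, hs⟩
    exact ⟨s + ∑ c, t c, by rw [hs]; simp⟩

theorem aux_charmat {n m : ℕ} (M : Matrix (Fin n) (Fin n) K) (P : Matrix (Fin m) (Fin n) K)
    (Y : Matrix (Fin n) (Fin m) K) (v : Fin m → K[X]) (r : Fin m) :
    (∃ s, ((P.map (algebraMap K (RatFunc K)) * ((charmatrix M).map ιK)⁻¹ *
        Y.map (algebraMap K (RatFunc K))) *ᵥ (fun j => ιK (v j))) r = ιK s) ↔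
      ∀ k : ℕ, ∑ c, (P * M ^ k * aeval M (v c) * Y) r c = 0 := by
  set A := (charmatrix M).map ιK with hA
  set B := P.map (algebraMap K (RatFunc K)) * A⁻¹ with hB
  have hdet : IsUnit A.det := by
    have : A.det = ιK M.charpoly := by
      rw [Matrix.charpoly, RingHom.map_det]; rfl
    rw [this, isUnit_iff_ne_zero]
    exact (map_ne_zero_iff _ (RatFunc.algebraMap_injective K)).mpr (Matrix.charpoly_monic M).ne_zero
  have hAM : A⁻¹ * M.map (algebraMap K (RatFunc K)) = ιK X • A⁻¹ - 1 := by
    have h1 : M.map (algebraMap K (RatFunc K)) = ιK X • (1 : Matrix (Fin n) (Fin n) (RatFunc K)) - A := by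
      ext i j
      by_cases hij : i = j
      · subst hij
        simp [hA, charmatrix_apply_eq, RatFunc.algebraMap_C, RatFunc.algebraMap_eq_C]
      · simp [hA, hij, RatFunc.algebraMap_C, RatFunc.algebraMap_eq_C]
    rw [h1, mul_sub, Matrix.nonsing_inv_mul _ hdet, Matrix.mul_smul, mul_one]
  let S : (Fin n → K) →ₗ[K] RatFunc K :=
    { toFun := fun w => (B *ᵥ (fun i => algebraMap K (RatFunc K) (w i))) r
      map_add' := by
        intro x y
        rw [← Pi.add_apply, ← Matrix.mulVec_add]
        congr 2
        ext i; simp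
      map_smul' := by
        intro c x
        simp only [Matrix.mulVec, dotProduct, Finset.smul_sum, RingHom.id_apply]
        refine Finset.sum_congr rfl fun i _ => ?_
        simp [Algebra.smul_def]; ring }
  let p : (Fin n → K) →ₗ[K] K := (LinearMap.proj r).comp P.mulVecLin
  let T : Module.End K (Fin n → K) := Matrix.toLin' M
  have hmap : ∀ (l : ℕ) (Q : Matrix (Fin l) (Fin n) K) (w : Fin n → K),
      (fun i => algebraMap K (RatFunc K) ((Q *ᵥ w) i)) =
        Q.map (algebraMap K (RatFunc K)) *ᵥ (fun i => algebraMap K (RatFunc K) (w i)) := by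
    intro l Q w
    ext i
    simp [Matrix.mulVec, dotProduct]
  have hS : ∀ w, S (T w) = ιK X * S w - ιK (C (p w)) := by
    intro w
    change (B *ᵥ (fun i => algebraMap K (RatFunc K) ((M *ᵥ w) i))) r =
      ιK X * (B *ᵥ (fun i => algebraMap K (RatFunc K) (w i))) r - ιK (C ((P *ᵥ w) r))
    have h2 : ιK (C ((P *ᵥ w) r)) = (P.map (algebraMap K (RatFunc K)) *ᵥ (fun i => algebraMap K (RatFunc K) (w i))) r := by
      rw [← hmap, RatFunc.algebraMap_C, RatFunc.algebraMap_eq_C]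
    rw [h2, hmap, Matrix.mulVec_mulVec, hB, Matrix.mul_assoc, hAM, Matrix.mul_sub, Matrix.sub_mulVec,
      Matrix.mul_smul, Matrix.mul_one, Matrix.smul_mulVec]
    rfl
  have key := aux_ratl_comb T p S hS (fun c => fun i => Y i c) v
  have e1 : ((B * Y.map (algebraMap K (RatFunc K))) *ᵥ (fun j => ιK (v j))) r =
      ∑ c, ιK (v c) * S (fun i => Y i c) := by
    simp only [Matrix.mulVec, dotProduct, S, Matrix.mul_apply, LinearMap.coe_mk, AddHom.coe_mk, Matrix.map_apply]
    refine Finset.sum_congr rfl fun c _ => mul_comm _ _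
  have e2 : ∀ k : ℕ, p ((T ^ k) (∑ c, aeval T (v c) (fun i => Y i c))) =
      ∑ c, (P * M ^ k * aeval M (v c) * Y) r c := by
    intro k
    rw [map_sum, map_sum]
    refine Finset.sum_congr rfl fun c _ => ?_
    have hT : aeval T (v c) = Matrix.toLin' (aeval M (v c)) := by
      exact Polynomial.aeval_algHom_apply (Matrix.toLinAlgEquiv' (R := K) (n := Fin n)).toAlgHom M (v c)
    have hTk : T ^ k = Matrix.toLin' (M ^ k) := (Matrix.toLin'_pow M k).symm
    rw [hT, hTk]
    change (P *ᵥ ((M ^ k) *ᵥ ((aeval M (v c)) *ᵥ (fun i => Y i c)))) r = _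
    rw [Matrix.mulVec_mulVec, Matrix.mulVec_mulVec]
    rfl
  rw [e1, key]
  simp only [e2]

theorem aux_aeval_transpose {n : ℕ} (M : Matrix (Fin n) (Fin n) K) (q : K[X]) :
    aeval Mᵀ q = (aeval M q)ᵀ := by
  induction q using Polynomial.induction_on' with
  | add a b ha hb => simp [ha, hb]
  | monomial k c =>
    rw [← C_mul_X_pow_eq_monomial, ← smul_eq_C_mul]
    simp [Matrix.transpose_pow]

def auxB {n m : ℕ} (M : Matrix (Fin n) (Fin n) K) (P : Matrix (Fin m) (Fin n) K)
    (Y : Matrix (Fin n) (Fin m) K) : (Fin m → K[X]) →ₗ[K] (Fin m → K[X]) →ₗ[K] K :=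
  LinearMap.mk₂ K (fun u v => ∑ r, ∑ c, (P * aeval M (u r) * aeval M (v c) * Y) r c)
    (by intros; simp [Matrix.mul_add, Matrix.add_mul, Finset.sum_add_distrib])
    (by intros; simp [Finset.mul_sum])
    (by intros; simp [Matrix.mul_add, Matrix.add_mul, Finset.sum_add_distrib])
    (by intros; simp [Finset.mul_sum])

theorem auxB_apply {n m : ℕ} (M : Matrix (Fin n) (Fin n) K) (P : Matrix (Fin m) (Fin n) K)
    (Y : Matrix (Fin n) (Fin m) K) (u v : Fin m → K[X]) :
    auxB M P Y u v = ∑ r, ∑ c, (P * aeval M (u r) * aeval M (v c) * Y) r c := rfl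

theorem auxB_smul {n m : ℕ} (M : Matrix (Fin n) (Fin n) K) (P : Matrix (Fin m) (Fin n) K)
    (Y : Matrix (Fin n) (Fin m) K) (u v : Fin m → K[X]) (q : K[X]) :
    auxB M P Y u (q • v) = auxB M P Y (q • u) v := by
  simp only [auxB_apply, Pi.smul_apply, smul_eq_mul]
  refine Finset.sum_congr rfl fun r _ => Finset.sum_congr rfl fun c _ => ?_
  have h1 : P * aeval M (u r) * aeval M (q * v c) = P * aeval M (q * u r) * aeval M (v c) := by
    rw [Matrix.mul_assoc P, Matrix.mul_assoc P, ← map_mul, ← map_mul]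
    congr 2
    ring
  rw [h1]

theorem auxB_transpose {n m : ℕ} (M : Matrix (Fin n) (Fin n) K) (P : Matrix (Fin m) (Fin n) K)
    (Y : Matrix (Fin n) (Fin m) K) (u v : Fin m → K[X]) :
    auxB Mᵀ Yᵀ Pᵀ v u = auxB M P Y u v := by
  simp only [auxB_apply]
  rw [Finset.sum_comm]
  refine Finset.sum_congr rfl fun r _ => Finset.sum_congr rfl fun c _ => ?_
  rw [aux_aeval_transpose, aux_aeval_transpose, ← Matrix.transpose_mul, Matrix.mul_assoc,
    ← Matrix.transpose_mul, ← Matrix.transpose_mul, Matrix.transpose_apply]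
  simp only [Matrix.mul_assoc]

theorem auxB_single {n m : ℕ} (M : Matrix (Fin n) (Fin n) K) (P : Matrix (Fin m) (Fin n) K)
    (Y : Matrix (Fin n) (Fin m) K) (r : Fin m) (k : ℕ) (v : Fin m → K[X]) :
    auxB M P Y (Pi.single r (X ^ k)) v = ∑ c, (P * M ^ k * aeval M (v c) * Y) r c := by
  rw [auxB_apply, Finset.sum_eq_single r]
  · simp
  · intro b _ hb
    simp [Pi.single_eq_of_ne hb]
  · simp

theorem auxB_ext {n m : ℕ} (M : Matrix (Fin n) (Fin n) K) (P : Matrix (Fin m) (Fin n) K)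
    (Y : Matrix (Fin n) (Fin m) K) (v : Fin m → K[X]) :
    (∀ u, auxB M P Y u v = 0) ↔ ∀ r k, auxB M P Y (Pi.single r (X ^ k)) v = 0 := by
  refine ⟨fun h r k => h _, fun h u => ?_⟩
  have : (auxB M P Y).flip v = 0 := by
    refine LinearMap.pi_ext' fun r => Polynomial.lhom_ext' fun k => LinearMap.ext_ring ?_
    have := h r k
    simpa [← Polynomial.X_pow_eq_monomial] using this
  exact LinearMap.congr_fun this u

/-- right relations of `(P,M,Y)` -/
theorem aux_denom {n m : ℕ} (M : Matrix (Fin n) (Fin n) K) (P : Matrix (Fin m) (Fin n) K)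
    (Y : Matrix (Fin n) (Fin m) K) (v : Fin m → K[X]) :
    (∀ r, ∃ s, ((P.map (algebraMap K (RatFunc K)) * ((charmatrix M).map ιK)⁻¹ *
        Y.map (algebraMap K (RatFunc K))) *ᵥ (fun j => ιK (v j))) r = ιK s) ↔
      ∀ u, auxB M P Y u v = 0 := by
  rw [auxB_ext]
  simp only [aux_charmat, auxB_single]

def auxE {m : ℕ} (d : ℕ) (p : Fin d × Fin m) : Fin m → K[X] := Pi.single p.2 (X ^ (p.1 : ℕ))

theorem auxE_apply {m : ℕ} (d : ℕ) (c : Fin d × Fin m → K) (i : Fin m) :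
    (∑ p, c p • auxE d p : Fin m → K[X]) i = ∑ k : Fin d, C (c (k, i)) * X ^ (k : ℕ) := by
  rw [Finset.sum_apply, Fintype.sum_prod_type]
  refine Finset.sum_congr rfl fun k _ => ?_
  rw [Finset.sum_eq_single i]
  · simp [auxE, smul_eq_C_mul]
  · intro b _ hb
    simp [auxE, Pi.single_eq_of_ne hb.symm]
  · simp

theorem auxE_degree {m : ℕ} (d : ℕ) (c : Fin d × Fin m → K) (i : Fin m) :
    ((∑ p, c p • auxE d p : Fin m → K[X]) i).degree < (d : WithBot ℕ) := by
  rw [auxE_apply]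
  refine (Polynomial.degree_sum_le _ _).trans_lt ?_
  rw [Finset.sup_lt_iff (by exact_mod_cast WithBot.bot_lt_coe _)]
  intro k _
  refine (degree_C_mul_X_pow_le _ _).trans_lt ?_
  exact_mod_cast k.2

theorem auxE_repr {m : ℕ} (d : ℕ) (v : Fin m → K[X]) (hv : ∀ i, (v i).degree < (d : WithBot ℕ)) :
    v = ∑ p : Fin d × Fin m, (v p.2).coeff p.1 • auxE d p := by
  ext1 i
  rw [auxE_apply]
  rw [Fin.sum_univ_eq_sum_range (fun k => C ((v i).coeff k) * X ^ k) d]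
  by_cases h0 : v i = 0
  · simp [h0]
  apply as_sum_range_C_mul_X_pow'
  have := hv i
  rw [degree_eq_natDegree h0] at this
  exact_mod_cast this

theorem aux_rank_part {n m d : ℕ} (M : Matrix (Fin n) (Fin n) K) (P : Matrix (Fin m) (Fin n) K)
    (Y : Matrix (Fin n) (Fin m) K) (D₀ : Matrix (Fin m) (Fin m) K[X]) (hD : D₀.det ≠ 0)
    (hR : ∀ v, v ∈ LinearMap.range D₀.mulVecLin ↔ ∀ u, auxB M P Y u v = 0)
    (Hk : Matrix (Fin d × Fin m) (Fin d × Fin m) K)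
    (hHk : ∀ p q, Hk p q = auxB M P Y (auxE d p) (auxE d q)) :
    Hk.rank ≤ D₀.det.natDegree ∧ (Hk.rank = D₀.det.natDegree ↔
      (∀ v, (∀ p, auxB M P Y (auxE d p) v = 0) → ∀ u, auxB M P Y u v = 0) ∧
      ∀ v, ∃ c : Fin d × Fin m → K, ∀ u, auxB M P Y u (v - ∑ p, c p • auxE d p) = 0) := by
  obtain ⟨hfin, hrk⟩ := aux_finrank_quot D₀ hD
  set R := LinearMap.range D₀.mulVecLin with hRdef
  let R' := R.restrictScalars K
  have hR' : ∀ v, v ∈ R' ↔ ∀ u, auxB M P Y u v = 0 := hR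
  let eqv := Submodule.Quotient.restrictScalarsEquiv K R
  have hfin' : FiniteDimensional K ((Fin m → K[X]) ⧸ R') := Module.Finite.equiv eqv.symm
  have hrk' : Module.finrank K ((Fin m → K[X]) ⧸ R') = D₀.det.natDegree := by
    rw [← hrk]; exact eqv.finrank_eq
  let h : (Fin m → K[X]) →ₗ[K] (Fin d × Fin m → K) := LinearMap.pi fun p => auxB M P Y (auxE d p)
  let g := R'.liftQ h (by
    intro v hv
    rw [LinearMap.mem_ker]
    ext p
    exact (hR' v).mp hv _)
  let π : (Fin d × Fin m → K) →ₗ[K] ((Fin m → K[X]) ⧸ R') :=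
    R'.mkQ ∘ₗ Fintype.linearCombination K (auxE d)
  have hH : Hk.mulVecLin = g ∘ₗ π := by
    refine LinearMap.ext fun c => ?_
    ext p
    simp only [g, π, h, LinearMap.comp_apply, Submodule.mkQ_apply, Submodule.liftQ_apply,
      Fintype.linearCombination_apply, map_sum, map_smul,
      Matrix.mulVecLin_apply, Matrix.mulVec, dotProduct, hHk]
    rw [Finset.sum_apply]
    refine Finset.sum_congr rfl fun q _ => ?_
    exact mul_comm (auxB M P Y (auxE d p) (auxE d q)) (c q)
  have key := aux_rank_comp π g
  rw [← hH, hrk'] at key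
  refine ⟨key.1, key.2.trans (and_congr ?_ ?_)⟩
  · rw [← LinearMap.ker_eq_bot, LinearMap.ker_eq_bot']
    constructor
    · intro hg v hv
      rw [← hR', ← Submodule.Quotient.mk_eq_zero]
      apply hg
      ext p
      exact hv p
    · intro hg x hx
      obtain ⟨v, rfl⟩ := Submodule.Quotient.mk_surjective _ x
      rw [Submodule.Quotient.mk_eq_zero, hR']
      exact hg v fun p => congrFun hx p
  · constructor
    · intro hp v
      obtain ⟨c, hc⟩ := hp (Submodule.Quotient.mk v)
      refine ⟨c, ?_⟩
      rw [← hR', ← Submodule.Quotient.eq]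
      exact hc.symm
    · intro hp x
      obtain ⟨v, rfl⟩ := Submodule.Quotient.mk_surjective _ x
      obtain ⟨c, hc⟩ := hp v
      refine ⟨c, ?_⟩
      rw [← hR', ← Submodule.Quotient.eq] at hc
      exact hc.symm

theorem aux_left_iff {n m d : ℕ} (M : Matrix (Fin n) (Fin n) K) (P : Matrix (Fin m) (Fin n) K)
    (Y : Matrix (Fin n) (Fin m) K) :
    (∀ v, (∀ p : Fin d × Fin m, auxB M P Y (auxE d p) v = 0) → ∀ u, auxB M P Y u v = 0) ↔
    ∀ u, ∃ c : Fin d × Fin m → K, ∀ v, auxB M P Y (u - ∑ p, c p • auxE d p) v = 0 := by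
  constructor
  · intro h u
    have : auxB M P Y u ∈ Submodule.span K
        (Set.range fun p : Fin d × Fin m => auxB M P Y (auxE d p)) := by
      refine mem_span_of_iInf_ker_le_ker fun v hv => ?_
      simp only [Submodule.mem_iInf, LinearMap.mem_ker] at hv ⊢
      exact h v hv u
    obtain ⟨c, hc⟩ := Submodule.mem_span_range_iff_exists_fun K |>.mp this
    refine ⟨c, fun v => ?_⟩
    have := LinearMap.congr_fun hc v
    simp only [map_sub, map_sum, map_smul, LinearMap.sub_apply] at this ⊢
    rw [this, sub_self]
  · intro h v hv u
    obtain ⟨c, hc⟩ := h u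
    have := hc v
    simpa [map_sub, map_sum, LinearMap.sum_apply, hv] using this

theorem aux_matDeg_le {m d : ℕ} (D : Matrix (Fin m) (Fin m) K[X]) :
    matDeg D ≤ (d : WithBot ℕ) ↔ ∀ i j, (D i j).degree ≤ (d : WithBot ℕ) := by
  rw [matDeg, Finset.sup_le_iff]
  exact ⟨fun h i j => h (i, j) (Finset.mem_univ _), fun h p _ => h _ _⟩

def auxF {n m : ℕ} (M : Matrix (Fin n) (Fin n) K) (P : Matrix (Fin m) (Fin n) K)
    (Y : Matrix (Fin n) (Fin m) K) : Matrix (Fin m) (Fin m) (RatFunc K) :=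
  P.map (algebraMap K (RatFunc K)) * ((charmatrix M).map ιK)⁻¹ * Y.map (algebraMap K (RatFunc K))

theorem aux_right_desc {n m d : ℕ} (M : Matrix (Fin n) (Fin n) K) (P : Matrix (Fin m) (Fin n) K)
    (Y : Matrix (Fin n) (Fin m) K) :
    (∃ N D, IsRightDesc (auxF M P Y) N D ∧ matDeg D ≤ (d : WithBot ℕ)) ↔
    ∀ v, ∃ c : Fin d × Fin m → K, ∀ u, auxB M P Y u (v - ∑ p, c p • auxE d p) = 0 := by
  constructor
  · rintro ⟨N, D, ⟨hdet, hN⟩, hdeg⟩ v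
    rw [aux_matDeg_le] at hdeg
    have hcol : ∀ j u, auxB M P Y u (fun i => D i j) = 0 := by
      intro j
      rw [← aux_denom]
      intro r
      exact ⟨N r j, congrFun (congrFun hN r) j⟩
    obtain ⟨q, hq⟩ := aux_division D hdet hdeg v
    refine ⟨fun p => ((v - D *ᵥ q) p.2).coeff p.1, fun u => ?_⟩
    rw [← auxE_repr d (v - D *ᵥ q) hq, sub_sub_cancel]
    have : D *ᵥ q = ∑ j, q j • (fun i => D i j) := by
      ext1 i
      simp [Matrix.mulVec, dotProduct, mul_comm]
    rw [this, map_sum]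
    exact Finset.sum_eq_zero fun j _ => by rw [auxB_smul, hcol]
  · intro h
    choose c hc using fun j : Fin m => h (Pi.single j (X ^ d))
    let D : Matrix (Fin m) (Fin m) K[X] := fun i j =>
      ((Pi.single j (X ^ d) - ∑ p, c j p • auxE d p : Fin m → K[X])) i
    have hden := fun j => (aux_denom M P Y _).mpr (hc j)
    choose N hN using hden
    have hlt : ∀ i j, (D i j - if i = j then X ^ d else 0).degree < (d : WithBot ℕ) := by
      intro i j
      have : D i j - (if i = j then X ^ d else 0) = - (∑ p, c j p • auxE d p : Fin m → K[X]) i := by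
        simp only [D, Pi.sub_apply, Pi.single_apply]
        ring
      rw [this, degree_neg]
      exact auxE_degree d _ i
    refine ⟨fun i j => N j i, D, ⟨aux_det_ne (d := d) D hlt, ?_⟩, ?_⟩
    · ext r j
      exact hN j r
    · rw [aux_matDeg_le]
      intro i j
      have : D i j = (D i j - if i = j then X ^ d else 0) + if i = j then X ^ d else 0 := by ring
      rw [this]
      refine (degree_add_le _ _).trans (max_le (hlt i j).le ?_)
      split_ifs
      · simp
      · simp

theorem auxF_transpose {n m : ℕ} (M : Matrix (Fin n) (Fin n) K) (P : Matrix (Fin m) (Fin n) K)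
    (Y : Matrix (Fin n) (Fin m) K) : (auxF M P Y)ᵀ = auxF Mᵀ Yᵀ Pᵀ := by
  rw [auxF, auxF, Matrix.transpose_mul, Matrix.transpose_mul, Matrix.transpose_nonsing_inv,
    charmatrix_transpose, Matrix.transpose_map, Matrix.transpose_map, Matrix.transpose_map,
    Matrix.mul_assoc]

theorem aux_left_desc {n m d : ℕ} (M : Matrix (Fin n) (Fin n) K) (P : Matrix (Fin m) (Fin n) K)
    (Y : Matrix (Fin n) (Fin m) K) :
    (∃ Dh Nh, IsLeftDesc (auxF M P Y) Dh Nh ∧ matDeg Dh ≤ (d : WithBot ℕ)) ↔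
    ∀ u, ∃ c : Fin d × Fin m → K, ∀ v, auxB M P Y (u - ∑ p, c p • auxE d p) v = 0 := by
  have h := aux_right_desc (d := d) Mᵀ Yᵀ Pᵀ
  simp only [auxB_transpose] at h
  rw [← h, ← auxF_transpose]
  constructor
  · rintro ⟨D, N, ⟨h1, h2⟩, h3⟩
    refine ⟨Nᵀ, Dᵀ, ⟨by rwa [Matrix.det_transpose], ?_⟩, ?_⟩
    · have := congrArg Matrix.transpose h2
      rwa [Matrix.transpose_mul] at this
    · rw [aux_matDeg_le] at h3 ⊢
      exact fun i j => h3 j i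
  · rintro ⟨N, D, ⟨h1, h2⟩, h3⟩
    refine ⟨Dᵀ, Nᵀ, ⟨by rwa [Matrix.det_transpose], ?_⟩, ?_⟩
    · have := congrArg Matrix.transpose h2
      rwa [Matrix.transpose_mul, Matrix.transpose_transpose] at this
    · rw [aux_matDeg_le] at h3 ⊢
      exact fun i j => h3 j i

def auxV (f : K[X]) (n : ℕ) : K[X] →ₗ[K] (Fin n → K) where
  toFun g := fun i => (g % f).coeff i
  map_add' g h := by ext i; simp [Polynomial.add_mod]
  map_smul' c g := by
    ext i
    simp [Polynomial.mod_def, Polynomial.smul_modByMonic]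

theorem auxV_apply (f : K[X]) (n : ℕ) (g : K[X]) (i : Fin n) : auxV f n g i = (g % f).coeff i := rfl

theorem auxV_mod (f : K[X]) (n : ℕ) (a g : K[X]) : auxV f n (a * (g % f)) = auxV f n (a * g) := by
  ext i
  rw [auxV_apply, auxV_apply]
  congr 1
  apply Polynomial.mod_eq_of_dvd_sub
  rw [← mul_sub]
  refine Dvd.dvd.mul_left ⟨-(g / f), ?_⟩ a
  have := EuclideanDomain.div_add_mod g f
  linear_combination this

theorem auxV_mul (n : ℕ) (f a g : K[X]) (hn : 1 ≤ n) (hf : f.natDegree = n) :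
    mulMat f a n *ᵥ auxV f n g = auxV f n (a * g) := by
  have hnat : (g % f).natDegree < n := by
    rw [← hf]; exact natDegree_mod_lt _ (by omega)
  have hg : g % f = ∑ k : Fin n, C ((g % f).coeff k) * X ^ (k : ℕ) := by
    rw [Fin.sum_univ_eq_sum_range (fun k => C ((g % f).coeff k) * X ^ k) n]
    exact as_sum_range_C_mul_X_pow' _ hnat
  rw [← auxV_mod]
  conv_rhs => rw [hg]
  rw [Finset.mul_sum, map_sum]
  ext i
  rw [Finset.sum_apply]
  simp only [Matrix.mulVec, dotProduct]
  refine Finset.sum_congr rfl fun k _ => ?_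
  have : a * (C ((g % f).coeff k) * X ^ (k : ℕ)) = (g % f).coeff k • (X ^ (k : ℕ) * a) := by
    rw [smul_eq_C_mul]; ring
  rw [this, map_smul]
  exact mul_comm _ _

theorem auxV_aeval (n : ℕ) (f a g q : K[X]) (hn : 1 ≤ n) (hf : f.natDegree = n) :
    aeval (mulMat f a n) q *ᵥ auxV f n g = auxV f n (q.comp a * g) := by
  induction q using Polynomial.induction_on' with
  | add p q hp hq => simp [Matrix.add_mulVec, hp, hq, add_mul]
  | monomial k c =>
    rw [← C_mul_X_pow_eq_monomial, ← smul_eq_C_mul]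
    have : ∀ k : ℕ, (mulMat f a n) ^ k *ᵥ auxV f n g = auxV f n (a ^ k * g) := by
      intro k
      induction k with
      | zero => simp
      | succ k ih =>
        rw [pow_succ', ← Matrix.mulVec_mulVec, ih, auxV_mul n f a _ hn hf, pow_succ', mul_assoc]
    rw [map_smul, map_pow, aeval_X, Matrix.smul_mulVec, this, smul_comp, X_pow_comp, smul_mul_assoc,
      map_smul]

theorem auxV_X (n m : ℕ) (f : K[X]) (hmn : m ≤ n) (hf : f.natDegree = n) (c : Fin m) :
    (fun i => Xup K n m i c) = auxV f n (X ^ (c : ℕ)) := by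
  have hc := c.2
  have hf0 : f ≠ 0 := by rintro rfl; simp at hf; omega
  have : (X ^ (c : ℕ) : K[X]) % f = X ^ (c : ℕ) := by
    rw [mod_eq_self_iff hf0, degree_X_pow, degree_eq_natDegree hf0, hf]
    exact_mod_cast (by omega : (c : ℕ) < n)
  ext i
  rw [auxV_apply, this, coeff_X_pow]
  rfl

theorem aux_projL (n m : ℕ) (hmn : m ≤ n) (w : Fin n → K) (r : Fin m) :
    (projL K m n *ᵥ w) r = w (Fin.castLE hmn r) := by
  simp only [Matrix.mulVec, dotProduct, projL]
  rw [Finset.sum_eq_single (Fin.castLE hmn r)]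
  · simp
  · intro b _ hb
    rw [if_neg, zero_mul]
    intro h
    apply hb
    ext
    simp [h]
  · simp

theorem aux_trunc (n m : ℕ) (f a : K[X]) (hn : 1 ≤ n) (hmn : m ≤ n) (hf : f.natDegree = n)
    (v : Fin m → K[X]) : IsTruncRelation f a m v ↔
      ∀ u, auxB (mulMat f a n) (projL K m n) (Xup K n m) u v = 0 := by
  rw [auxB_ext]
  have key : ∀ (r : Fin m) (k : ℕ),
      auxB (mulMat f a n) (projL K m n) (Xup K n m) (Pi.single r (X ^ k)) v =
        ((a ^ k * relEval a v) % f).coeff r := by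
    intro r k
    rw [auxB_single]
    have h1 : ∀ c, (projL K m n * mulMat f a n ^ k * aeval (mulMat f a n) (v c) * Xup K n m) r c
        = auxV f n (a ^ k * (X ^ (c : ℕ) * (v c).comp a)) (Fin.castLE hmn r) := by
      intro c
      have h2 : aeval (mulMat f a n) (X ^ k * v c) *ᵥ (fun i => Xup K n m i c) =
          auxV f n (a ^ k * (X ^ (c : ℕ) * (v c).comp a)) := by
        rw [auxV_X n m f hmn hf, auxV_aeval n f a _ _ hn hf, mul_comp, X_pow_comp]
        congr 1
        ring
      rw [← h2, ← aux_projL n m hmn (aeval (mulMat f a n) (X ^ k * v c) *ᵥ (fun i => Xup K n m i c)) r,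
        Matrix.mulVec_mulVec, map_mul, map_pow, aeval_X,
        ← Matrix.mul_assoc]
      rfl
    simp only [h1]
    have h3 : a ^ k * relEval a v = ∑ c : Fin m, a ^ k * (X ^ (c : ℕ) * (v c).comp a) := by
      rw [relEval, Finset.mul_sum]
    rw [h3]
    have h4 := congrFun (map_sum (auxV f n) (fun c : Fin m => a ^ k * (X ^ (c : ℕ) * (v c).comp a))
      Finset.univ) (Fin.castLE hmn r)
    rw [Finset.sum_apply] at h4
    exact h4.symm
  simp only [key]
  exact ⟨fun h r k => h k r r.2, fun h k j hj => h ⟨j, hj⟩ k⟩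

theorem aux_fracMat (n m : ℕ) (f a : K[X]) :
    fracMat f a n m m = auxF (mulMat f a n) (projL K m n) (Xup K n m) := by
  have h1 : projL (RatFunc K) m n = (projL K m n).map (algebraMap K (RatFunc K)) := by
    ext i j
    simp only [projL, Matrix.map_apply]
    split_ifs <;> simp
  have h2 : Xup (RatFunc K) n m = (Xup K n m).map (algebraMap K (RatFunc K)) := by
    ext i j
    simp only [Xup, Matrix.map_apply]
    split_ifs <;> simp
  rw [fracMat, auxF, h1, h2]

theorem aux_hankel (n m d : ℕ) (f a : K[X]) (p q : Fin d × Fin m) :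
    hankelMat f a n m d p q =
      auxB (mulMat f a n) (projL K m n) (Xup K n m) (auxE d p) (auxE d q) := by
  rw [auxE, auxB_single, Finset.sum_eq_single q.2]
  · have h1 : (Xup K n m)ᵀ = projL K m n := by
      ext i j
      simp only [Matrix.transpose_apply, Xup, projL, eq_comm]
    simp only [hankelMat, auxE, h1, Pi.single_eq_same, map_pow, aeval_X, pow_add, Matrix.mul_assoc]
  · intro b _ hb
    simp [auxE, Pi.single_eq_of_ne hb]
  · simp

theorem rank_hankel_le_truncDeterminantalDegree
    (n m d : ℕ) (hn : 1 ≤ n) (hm : 1 ≤ m) (hmn : m ≤ n) (hd : 1 ≤ d)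
    (f a : K[X]) (hf : f.natDegree = n) (ha : a.degree < (n : WithBot ℕ))
    (D₀ : Matrix (Fin m) (Fin m) K[X]) (hD₀ : IsTruncBasis f a m D₀) :
    (hankelMat f a n m d).rank ≤ D₀.det.natDegree ∧
    ((hankelMat f a n m d).rank = D₀.det.natDegree ↔
      DescribableInDegree (fracMat f a n m m) d) := by
  obtain ⟨hdet, hcol, hgen⟩ := hD₀
  have hR : ∀ v, v ∈ LinearMap.range D₀.mulVecLin ↔
      ∀ u, auxB (mulMat f a n) (projL K m n) (Xup K n m) u v = 0 := by
    intro v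
    rw [← aux_span_range]
    constructor
    · intro hv
      induction hv using Submodule.span_induction with
      | mem x hx =>
        obtain ⟨j, rfl⟩ := hx
        exact (aux_trunc n m f a hn hmn hf _).mp (hcol j)
      | zero => intro u; simp
      | add x y _ _ hx hy => intro u; rw [map_add, hx, hy, add_zero]
      | smul q x _ hx => intro u; rw [auxB_smul, hx]
    · intro hv
      exact hgen v ((aux_trunc n m f a hn hmn hf _).mpr hv)
  have key := aux_rank_part (d := d) (mulMat f a n) (projL K m n) (Xup K n m) D₀ hdet hR
    (hankelMat f a n m d) (aux_hankel n m d f a)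
  refine ⟨key.1, key.2.trans ?_⟩
  rw [aux_fracMat, DescribableInDegree, aux_right_desc, aux_left_desc, aux_left_iff]
  exact and_comm
end
end
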